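/- arXiv:1208.4755 — 3 statements merged into one kernel-verified Lean document; each statement's English description precedes it below -/
import Mathlib

section
/- Let K be a Kalton–Roberts constant and let Γ be an infinite cardinal with cofinality cf(Γ). Then m₀(Γ) has the cf(Γ)⁺-SVM property with constant v for every v > 16K: for every v > 16K, every set algebra F of cardinality at most cf(Γ), and every 1-additive ν : F → m₀(Γ), there exists a vector measure μ : F → m₀(Γ) with ‖ν(A) − μ(A)‖ ≤ v for all A ∈ F. -/
/-!
Each coordinate `ν_γ` of `ν` is a real 1-additive function, so it lies within `K` of a real measure
`m_γ`. These measures form a measure with values in `ℓ∞(Γ)`, and they have to be corrected so that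
every `A ∈ F` is given an element of `m₀(Γ)`.

Fix `δ > 0` and inject `F` into the initial ordinal of `cf(Γ)`, so that every `A ∈ F` has fewer than
`cf(Γ)` predecessors; together with `A` they generate an algebra `S(A)` with still fewer than
`cf(Γ)` elements (`mk_genAlg_lt`). For a coordinate `γ`, let `G_γ` be the union of the algebras
`S(A)` on which `|ν_γ| ≤ δ`. If nonempty, it is an algebra, and `|m_γ| ≤ K + δ` on it. By
`exists_extension` there is a measure `l_γ` on all subsets of `Ω` which agrees with `m_γ` on `G_γ` and is bounded by
`K + δ` everywhere. Then `m_γ - l_γ` is a measure within `2 K + δ` of `ν_γ` and vanishing on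
`G_γ` (`exists_coordinate_measure`). For fixed `A`, the coordinates `γ` with `A ∉ G_γ` are
contained in the union of the sets `{γ | δ ≤ |ν_γ(C)|}`, `C ∈ S(A)`: fewer than `cf(Γ)` sets
of cardinality `< #Γ`, so the union has cardinality `< #Γ`, and `γ ↦ (m_γ - l_γ)(A)` belongs to `m₀(Γ)`.

The extension `l` is a limit along an ultrafilter. For finite `P ⊆ G`, a choice of representatives
`r : Ω → Ω` of the equivalence "belongs to the same members of `P`" gives the Boolean homomorphism
`A ↦ r⁻¹(A)` from all subsets of `Ω` into the algebra generated by `P`, fixing the members of `P`;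
hence `A ↦ m(r⁻¹(A))` is additive, agrees with `m` on `P`, and has the same bound as `m` on `G`.
-/

open Cardinal ENNReal

/-- A set algebra: contains `∅`, closed under complements and finite unions. -/
def IsSetAlg {Ω : Type*} (F : Set (Set Ω)) : Prop :=
  ∅ ∈ F ∧ (∀ A ∈ F, Aᶜ ∈ F) ∧ ∀ A ∈ F, ∀ B ∈ F, A ∪ B ∈ F

/-- `ν` is 1-additive on the set algebra `F`. -/
def OneAdd {Ω X : Type*} [SeminormedAddCommGroup X] (F : Set (Set Ω)) (ν : Set Ω → X) : Prop :=
  ∀ A ∈ F, ∀ B ∈ F, Disjoint A B → ‖ν (A ∪ B) - ν A - ν B‖ ≤ 1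

/-- `μ` is a (finitely additive) vector measure on the set algebra `F`. -/
def VectMeas {Ω X : Type*} [AddCommGroup X] (F : Set (Set Ω)) (μ : Set Ω → X) : Prop :=
  ∀ A ∈ F, ∀ B ∈ F, Disjoint A B → μ (A ∪ B) = μ A + μ B

/-- `K` is a Kalton–Roberts constant. -/
def IsKRConst (K : ℝ) : Prop :=
  ∀ (Ω : Type) (F : Set (Set Ω)), IsSetAlg F →
    ∀ ν : Set Ω → ℝ, OneAdd F ν →
      ∃ μ : Set Ω → ℝ, VectMeas F μ ∧ ∀ A ∈ F, |ν A - μ A| ≤ K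

/-- `X` has the SVM property with constant `v` (arbitrary set algebras). -/
def HasSVMBound (X : Type*) [SeminormedAddCommGroup X] (v : ℝ) : Prop :=
  ∀ (Ω : Type) (F : Set (Set Ω)), IsSetAlg F →
    ∀ ν : Set Ω → X, OneAdd F ν →
      ∃ μ : Set Ω → X, VectMeas F μ ∧ ∀ A ∈ F, ‖ν A - μ A‖ ≤ v

/-- `X` has the ω-SVM property with constant `v` (finite set algebras). -/
def HasOmegaSVMBound (X : Type*) [SeminormedAddCommGroup X] (v : ℝ) : Prop :=
  ∀ (Ω : Type) (F : Set (Set Ω)), IsSetAlg F → F.Finite →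
    ∀ ν : Set Ω → X, OneAdd F ν →
      ∃ μ : Set Ω → X, VectMeas F μ ∧ ∀ A ∈ F, ‖ν A - μ A‖ ≤ v

/-- `X` has the κ-SVM property with constant `v` (set algebras of cardinality `< κ`). -/
def HasKappaSVMBound (X : Type*) [SeminormedAddCommGroup X] (κ : Cardinal) (v : ℝ) : Prop :=
  ∀ (Ω : Type) (F : Set (Set Ω)), IsSetAlg F → #(↥F) < κ →
    ∀ ν : Set Ω → X, OneAdd F ν →
      ∃ μ : Set Ω → X, VectMeas F μ ∧ ∀ A ∈ F, ‖ν A - μ A‖ ≤ v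


/-- The subspace m₀(Γ) of ℓ∞(Γ): functions x such that for every ε > 0 the set
of coordinates with |x γ| ≥ ε has cardinality less than #Γ. -/
noncomputable def mZero (Γ : Type) : Submodule ℝ ↥(lp (fun _ : Γ => ℝ) ⊤) :=
  Submodule.span ℝ {x | ∀ ε : ℝ, 0 < ε → #(↥{γ : Γ | ε ≤ |x γ|}) < #Γ}

/-! ### Generated algebras -/

/-- `A` is saturated for the equivalence relation "belongs to the same members of `t`" on `Ω`. For
finite `t` this says that `A` lies in the algebra generated by `t`. -/
def SatBy {Ω : Type*} (t : Set (Set Ω)) (A : Set Ω) : Prop :=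
  ∀ x y, (∀ a ∈ t, (x ∈ a ↔ y ∈ a)) → (x ∈ A ↔ y ∈ A)

/-- The set algebra generated by `s`: the sets saturated with respect to some finite `t ⊆ s`. -/
def genAlg {Ω : Type*} (s : Set (Set Ω)) : Set (Set Ω) :=
  {A | ∃ t : Set (Set Ω), t.Finite ∧ t ⊆ s ∧ SatBy t A}

theorem SatBy.mono {Ω : Type*} {t t' : Set (Set Ω)} (h : t ⊆ t') {A : Set Ω} (hA : SatBy t A) :
    SatBy t' A :=
  fun x y hxy => hA x y fun a ha => hxy a (h ha)

theorem genAlg_mono {Ω : Type*} {s s' : Set (Set Ω)} (h : s ⊆ s') : genAlg s ⊆ genAlg s' :=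
  fun _ ⟨t, ht, hts, hA⟩ => ⟨t, ht, hts.trans h, hA⟩

theorem subset_genAlg {Ω : Type*} (s : Set (Set Ω)) : s ⊆ genAlg s :=
  fun A hA => ⟨{A}, Set.finite_singleton A, by simpa using hA, fun x y h => h A rfl⟩

theorem isSetAlg_genAlg {Ω : Type*} (s : Set (Set Ω)) : IsSetAlg (genAlg s) := by
  refine ⟨⟨∅, Set.finite_empty, Set.empty_subset _, fun x y _ => by simp⟩, ?_, ?_⟩
  · rintro A ⟨t, ht, hts, hA⟩
    exact ⟨t, ht, hts, fun x y h => not_congr (hA x y h)⟩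
  · rintro A ⟨t, ht, hts, hA⟩ B ⟨u, hu, hus, hB⟩
    refine ⟨t ∪ u, ht.union hu, Set.union_subset hts hus, fun x y h => ?_⟩
    exact or_congr (hA.mono Set.subset_union_left x y h) (hB.mono Set.subset_union_right x y h)

theorem IsSetAlg.inter {Ω : Type*} {F : Set (Set Ω)} (hF : IsSetAlg F) {A B : Set Ω}
    (hA : A ∈ F) (hB : B ∈ F) : A ∩ B ∈ F := by
  have := hF.2.1 _ (hF.2.2 _ (hF.2.1 _ hA) _ (hF.2.1 _ hB))
  rwa [Set.compl_union, compl_compl, compl_compl] at this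

theorem SatBy.mem {Ω : Type*} {F : Set (Set Ω)} (hF : IsSetAlg F) {t : Set (Set Ω)}
    (ht : t.Finite) : t ⊆ F → ∀ A, SatBy t A → A ∈ F := by
  induction t, ht using Set.Finite.induction_on with
  | empty =>
    intro _ A hA
    rcases A.eq_empty_or_nonempty with rfl | ⟨x, hx⟩
    · exact hF.1
    · have : A = ∅ᶜ := by
        rw [Set.compl_empty]
        exact Set.eq_univ_of_forall fun y => (hA x y (by simp)).1 hx
      exact this ▸ hF.2.1 _ hF.1
  | @insert a t _ _ ih =>
    intro hat A hA
    have ha : a ∈ F := hat (Set.mem_insert _ _)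
    have htF : t ⊆ F := (Set.subset_insert _ _).trans hat
    -- the `t`-saturation of `A ∩ b` has the same trace on `b` as `A`, for `b = a` and `b = aᶜ`
    have key : ∀ b : Set Ω, (b = a ∨ b = aᶜ) → b ∈ F → A ∩ b ∈ F := by
      intro b hb hbF
      have h1 : {x | ∃ y ∈ A ∩ b, ∀ c ∈ t, (y ∈ c ↔ x ∈ c)} ∈ F := by
        refine ih htF _ fun x x' hxx' => ?_
        constructor
        · rintro ⟨y, hy, h⟩
          exact ⟨y, hy, fun c hc => (h c hc).trans (hxx' c hc)⟩
        · rintro ⟨y, hy, h⟩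
          exact ⟨y, hy, fun c hc => (h c hc).trans (hxx' c hc).symm⟩
      convert hF.inter h1 hbF using 1
      ext x
      constructor
      · exact fun hx => ⟨⟨x, hx, fun _ _ => Iff.rfl⟩, hx.2⟩
      · rintro ⟨⟨y, hy, h⟩, hxb⟩
        refine ⟨(hA y x ?_).1 hy.1, hxb⟩
        rintro c (rfl | hc)
        · rcases hb with rfl | rfl
          · exact iff_of_true hy.2 hxb
          · exact iff_of_false hy.2 hxb
        · exact h c hc
    have := hF.2.2 _ (key a (Or.inl rfl) ha) _ (key aᶜ (Or.inr rfl) (hF.2.1 _ ha))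
    rwa [Set.inter_union_compl] at this

theorem genAlg_subset {Ω : Type*} {F : Set (Set Ω)} (hF : IsSetAlg F) {s : Set (Set Ω)}
    (hs : s ⊆ F) : genAlg s ⊆ F :=
  fun A ⟨_, ht, hts, hA⟩ => hA.mem hF ht (hts.trans hs) A

theorem finite_satBy {Ω : Type*} {t : Set (Set Ω)} (ht : t.Finite) : {A | SatBy t A}.Finite := by
  have := ht.to_subtype
  let f : Set Ω → Set (Set t) := fun A => (fun x => {a : t | x ∈ a.1}) '' A
  refine Set.Finite.of_finite_image (f := f) (Set.toFinite _) ?_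
  have aux : ∀ A B : Set Ω, SatBy t B → f A = f B → A ⊆ B := by
    intro A B hB h x hx
    have : (fun x => {a : t | x ∈ a.1}) x ∈ f B := h ▸ ⟨x, hx, rfl⟩
    obtain ⟨y, hy, hyx⟩ := this
    exact (hB y x fun a ha => Set.ext_iff.1 hyx ⟨a, ha⟩).1 hy
  exact fun A hA B hB h => (aux A B hB h).antisymm (aux B A hA h.symm)

theorem mk_genAlg_lt {Ω : Type} {s : Set (Set Ω)} {κ : Cardinal} (hκ : ℵ₀ ≤ κ) (hs : #s < κ) :
    #(genAlg s) < κ := by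
  rcases s.finite_or_infinite with hfin | hinf
  · have : (genAlg s).Finite :=
      (finite_satBy hfin).subset fun A ⟨t, _, hts, hA⟩ => hA.mono hts
    exact this.lt_aleph0.trans_le hκ
  · have := hinf.to_subtype
    have hsub : genAlg s ⊆ ⋃ t : Finset s, {A | SatBy (Subtype.val '' (t : Set s)) A} := by
      rintro A ⟨t, ht, hts, hA⟩
      have hfin : (Subtype.val ⁻¹' t : Set s).Finite := ht.preimage Subtype.val_injective.injOn
      refine Set.mem_iUnion.2 ⟨hfin.toFinset, ?_⟩
      refine SatBy.mono ?_ hA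
      intro a ha
      exact ⟨⟨a, hts ha⟩, by simpa using ha, rfl⟩
    refine lt_of_le_of_lt ?_ hs
    calc #(genAlg s) ≤ _ := mk_le_mk_of_subset hsub
      _ ≤ #(Finset s) * ⨆ t : Finset s, #{A | SatBy (Subtype.val '' (t : Set s)) A} :=
        mk_iUnion_le _
      _ ≤ #s * ℵ₀ := by
        rw [mk_finset_of_infinite]
        gcongr
        exact ciSup_le' fun t => (finite_satBy (t.finite_toSet.image _)).lt_aleph0.le
      _ = #s := mul_eq_left (aleph0_le_mk s) (aleph0_le_mk s) aleph0_ne_zero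

/-! ### Extension of bounded measures -/

/-- A representative map for the equivalence "belongs to the same members of `P`". Preimages under
it are `P`-saturated, and it does not leave the members of `P`. -/
theorem exists_representative {Ω : Type*} (P : Set (Set Ω)) :
    ∃ r : Ω → Ω, (∀ A, SatBy P (r ⁻¹' A)) ∧ ∀ A ∈ P, r ⁻¹' A = A := by
  let S : Setoid Ω := Setoid.ker fun x => {a | a ∈ P ∧ x ∈ a}
  have hS : ∀ x y, S.r x y ↔ ∀ a ∈ P, (x ∈ a ↔ y ∈ a) := fun x y => by
    change {a | a ∈ P ∧ x ∈ a} = {a | a ∈ P ∧ y ∈ a} ↔ _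
    simp [Set.ext_iff]
  refine ⟨fun x => (Quotient.mk S x).out, fun A x y hxy => ?_, fun A hA => ?_⟩
  · have : Quotient.mk S x = Quotient.mk S y := Quotient.sound ((hS x y).2 hxy)
    simp only [Set.mem_preimage, this]
  · ext x
    exact (hS _ _).1 (Quotient.mk_out (s := S) x) A hA

/-- A measure bounded by `M` on a subalgebra `G` extends from `G` to a measure on all subsets of `Ω`
with the same bound. -/
theorem exists_extension {Ω : Type*} {G : Set (Set Ω)} (hG : IsSetAlg G) {m : Set Ω → ℝ}
    (hm : VectMeas G m) {M : ℝ} (hM : ∀ A ∈ G, |m A| ≤ M) :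
    ∃ l : Set Ω → ℝ, (∀ A B, Disjoint A B → l (A ∪ B) = l A + l B) ∧ (∀ A, |l A| ≤ M) ∧
      ∀ A ∈ G, l A = m A := by
  classical
  choose r hr hrP using fun P : Finset G => exists_representative (Subtype.val '' (P : Set G))
  have hrG : ∀ P A, r P ⁻¹' A ∈ G := fun P A =>
    (hr P A).mem hG (P.finite_toSet.image _) (by rintro _ ⟨a, _, rfl⟩; exact a.2) _
  let U : Ultrafilter (Finset G) := Ultrafilter.of Filter.atTop
  have hU : (U : Filter (Finset G)) ≤ Filter.atTop := Ultrafilter.of_le _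
  have hlim : ∀ A, ∃ c ∈ Set.Icc (-M) M,
      Filter.Tendsto (fun P => m (r P ⁻¹' A)) U (nhds c) := by
    intro A
    obtain ⟨c, hc, h⟩ := (isCompact_Icc (a := -M) (b := M)).ultrafilter_le_nhds
      (U.map fun P => m (r P ⁻¹' A)) (by
        rw [Filter.le_principal_iff]
        exact Filter.mem_map.2 (Filter.univ_mem' fun P => abs_le.1 (hM _ (hrG P A))))
    exact ⟨c, hc, h⟩
  choose l hl hlt using hlim
  refine ⟨l, fun A B hAB => ?_, fun A => abs_le.2 (hl A), fun A hA => ?_⟩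
  · refine tendsto_nhds_unique (hlt (A ∪ B)) (((hlt A).add (hlt B)).congr fun P => ?_)
    rw [Set.preimage_union, hm _ (hrG P A) _ (hrG P B) (hAB.preimage _)]
  · refine tendsto_nhds_unique (hlt A) (tendsto_const_nhds.congr' ?_)
    filter_upwards [hU (Filter.mem_atTop {⟨A, hA⟩})] with P hP
    rw [hrP P A ⟨⟨A, hA⟩, hP (Finset.mem_singleton_self _), rfl⟩]

/-! ### The space `m₀(Γ)` -/

/-- The spanning set in the definition of `mZero` is already a subspace. -/
theorem mk_lt_of_mem_mZero {Γ : Type} [Infinite Γ] {x : lp (fun _ : Γ => ℝ) ⊤} (hx : x ∈ mZero Γ) :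
    ∀ ε : ℝ, 0 < ε → #(↥{γ : Γ | ε ≤ |x γ|}) < #Γ := by
  induction hx using Submodule.span_induction with
  | mem x h => exact h
  | zero =>
    intro ε hε
    have : {γ : Γ | ε ≤ |(0 : lp (fun _ : Γ => ℝ) ⊤) γ|} = ∅ := by
      ext γ
      simp [hε]
    rw [this]
    simp [pos_iff_ne_zero]
  | add x y _ _ hx hy =>
    intro ε hε
    have hsub : {γ : Γ | ε ≤ |(x + y) γ|} ⊆ {γ | ε / 2 ≤ |x γ|} ∪ {γ | ε / 2 ≤ |y γ|} := by
      intro γ h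
      by_contra hc
      simp only [Set.mem_union, Set.mem_ofPred_eq, not_or, not_le] at hc h
      have := abs_add_le (x γ) (y γ)
      have h' : ε ≤ |x γ + y γ| := h
      linarith
    exact ((mk_le_mk_of_subset hsub).trans (mk_union_le _ _)).trans_lt
      (add_lt_of_lt (aleph0_le_mk Γ) (hx _ (half_pos hε)) (hy _ (half_pos hε)))
  | smul c x _ hx =>
    intro ε hε
    refine (mk_le_mk_of_subset ?_).trans_lt (hx (ε / (|c| + 1)) (by positivity))
    intro γ h
    have h' : ε ≤ |c * x γ| := h
    rw [abs_mul] at h'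
    rw [Set.mem_ofPred_eq, div_le_iff₀ (by positivity)]
    nlinarith [abs_nonneg (x γ)]

/-! ### The measure in one coordinate -/

/-- Let `s` be a chain of subfamilies of `F`, indexed by `F`, with `A ∈ s A`. A real 1-additive
function is within `2 K + δ` of a measure vanishing at each `A` such that the function is at most
`δ` in absolute value on the algebra generated by `s A`. -/
theorem exists_coordinate_measure {K : ℝ} (hK : IsKRConst K) {Ω : Type} {F : Set (Set Ω)}
    (hF : IsSetAlg F) {s : F → Set (Set Ω)} (hsF : ∀ A, s A ⊆ F) (hs : ∀ A, A.1 ∈ s A)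
    (hchain : ∀ A B, s A ⊆ s B ∨ s B ⊆ s A) {n : Set Ω → ℝ} (hn : OneAdd F n) {δ : ℝ}
    (hδ : 0 ≤ δ) :
    ∃ m : Set Ω → ℝ, VectMeas F m ∧ (∀ A ∈ F, |n A - m A| ≤ 2 * K + δ) ∧
      ∀ A : F, (∀ C ∈ genAlg (s A), |n C| ≤ δ) → m A = 0 := by
  obtain ⟨m, hm, hmK⟩ := hK Ω F hF n hn
  have hK0 : 0 ≤ K := (abs_nonneg _).trans (hmK ∅ hF.1)
  by_cases hI : ∃ A : F, ∀ C ∈ genAlg (s A), |n C| ≤ δ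
  swap
  · exact ⟨m, hm, fun A hA => (hmK A hA).trans (by linarith), fun A hA => (hI ⟨A, hA⟩).elim⟩
  obtain ⟨A₀, hA₀⟩ := hI
  let G : Set (Set Ω) := {C | ∃ A : F, (∀ C ∈ genAlg (s A), |n C| ≤ δ) ∧ C ∈ genAlg (s A)}
  have hGF : G ⊆ F := fun C ⟨A, _, hC⟩ => genAlg_subset hF (hsF A) hC
  have hG : IsSetAlg G := by
    refine ⟨⟨A₀, hA₀, (isSetAlg_genAlg _).1⟩, ?_, ?_⟩
    · rintro C ⟨A, hA, hC⟩
      exact ⟨A, hA, (isSetAlg_genAlg _).2.1 _ hC⟩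
    · rintro C ⟨A, hA, hC⟩ D ⟨B, hB, hD⟩
      rcases hchain A B with h | h
      · exact ⟨B, hB, (isSetAlg_genAlg _).2.2 _ (genAlg_mono h hC) _ hD⟩
      · exact ⟨A, hA, (isSetAlg_genAlg _).2.2 _ hC _ (genAlg_mono h hD)⟩
  have hbound : ∀ C ∈ G, |m C| ≤ K + δ := by
    intro C hC
    have h1 := hmK C (hGF hC)
    obtain ⟨A, hA, hCA⟩ := hC
    have h2 := hA C hCA
    rw [abs_le] at *
    constructor <;> linarith
  obtain ⟨l, hl, hlM, hlG⟩ :=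
    exists_extension hG (fun A hA B hB => hm A (hGF hA) B (hGF hB)) hbound
  refine ⟨fun A => m A - l A, fun A hA B hB hAB => ?_, fun A hA => ?_, fun A hA => ?_⟩
  · simp only [hm A hA B hB hAB, hl A B hAB]
    ring
  · have h1 := hmK A hA
    have h2 := hlM A
    rw [abs_le] at *
    constructor <;> linarith
  · exact sub_eq_zero.2 (hlG A ⟨A, hA, subset_genAlg _ (hs A)⟩).symm

/-- A family of cardinality at most an infinite `κ` is covered by a chain of subfamilies of
cardinality less than `κ`. -/
theorem exists_chain {Ω : Type} (F : Set (Set Ω)) {κ : Cardinal} (hκ : ℵ₀ ≤ κ) (hF : #F ≤ κ) :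
    ∃ s : F → Set (Set Ω), (∀ A, s A ⊆ F) ∧ (∀ A, A.1 ∈ s A) ∧
      (∀ A B, s A ⊆ s B ∨ s B ⊆ s A) ∧ ∀ A, #(s A) < κ := by
  obtain ⟨e⟩ : Nonempty (F ↪ κ.ord.ToType) := by
    rw [← Cardinal.le_def, mk_ord_toType]
    exact hF
  refine ⟨fun A => Subtype.val '' {B : F | e B ≤ e A}, ?_, ?_, ?_, ?_⟩
  · rintro A _ ⟨B, _, rfl⟩
    exact B.2
  · exact fun A => ⟨A, le_refl (e A), rfl⟩
  · intro A B
    rcases le_total (e A) (e B) with h | h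
    · exact Or.inl (Set.image_mono fun C (hC : e C ≤ e A) => hC.trans h)
    · exact Or.inr (Set.image_mono fun C (hC : e C ≤ e B) => hC.trans h)
  · intro A
    calc #(Subtype.val '' {B : F | e B ≤ e A}) ≤ #{B : F | e B ≤ e A} := mk_image_le
      _ ≤ #(Set.Iic (e A)) := by
        exact mk_le_of_injective (f := fun B => ⟨e B.1, B.2⟩) fun B C h =>
          Subtype.ext (e.injective (congrArg Subtype.val h))
      _ ≤ #(Set.Iio (e A)) + 1 := by
        rw [← Set.Iio_insert]
        exact mk_insert_le
      _ < κ := add_lt_of_lt hκ (by simpa using mk_Iio_lt (e A) (by simp))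
        (one_lt_aleph0.trans_le hκ)

/-- for an infinite cardinal Γ, m₀(Γ) has the cf(Γ)⁺-SVM property
with any constant v > 16K, where K is a Kalton–Roberts constant. -/
theorem stmt_12 (K : ℝ) (hK : IsKRConst K) (Γ : Type) [Infinite Γ]
    (v : ℝ) (hv : 16 * K < v)
    (Ω : Type) (F : Set (Set Ω)) (hF : IsSetAlg F)
    (hcard : #(↥F) ≤ ((#Γ).ord).cof)
    (ν : Set Ω → ↥(mZero Γ)) (hν : OneAdd F ν) :
    ∃ μ : Set Ω → ↥(mZero Γ), VectMeas F μ ∧ ∀ A ∈ F, ‖ν A - μ A‖ ≤ v := by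
  have hΓ : ℵ₀ ≤ #Γ := aleph0_le_mk Γ
  have hκ : ℵ₀ ≤ ((#Γ).ord).cof :=
    Ordinal.aleph0_le_cof_iff.2 (Ordinal.one_lt_cof_iff.2 (isSuccLimit_ord hΓ))
  obtain ⟨s, hsF, hs, hchain, hcards⟩ := exists_chain F hκ hcard
  have hK0 : 0 ≤ K := by
    obtain ⟨m, -, hm⟩ := hK Ω F hF (fun _ => 0) (by intro A _ B _ _; simp)
    exact (abs_nonneg _).trans (hm ∅ hF.1)
  obtain ⟨δ, hδ, hδv⟩ : ∃ δ : ℝ, 0 < δ ∧ 2 * K + δ ≤ v := ⟨v - 2 * K, by linarith, by linarith⟩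
  have hcoord : ∀ γ : Γ, OneAdd F fun A => (ν A).1 γ := by
    intro γ A hA B hB hAB
    exact (lp.norm_apply_le_norm ENNReal.top_ne_zero (ν (A ∪ B) - ν A - ν B).1 γ).trans
      (hν A hA B hB hAB)
  choose m hm hmv hm0 using fun γ =>
    exists_coordinate_measure hK hF hsF hs hchain (hcoord γ) hδ.le
  have hmem : ∀ A ∈ F, Memℓp (fun γ => m γ A) ∞ := by
    intro A hA
    refine memℓp_infty ⟨‖(ν A).1‖ + v, ?_⟩
    rintro _ ⟨γ, rfl⟩
    have h1 := lp.norm_apply_le_norm ENNReal.top_ne_zero (ν A).1 γ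
    have h2 := hmv γ A hA
    simp only [Real.norm_eq_abs] at h1 ⊢
    rw [abs_le] at *
    constructor <;> linarith
  have hm0' : ∀ (A : Set Ω) (hA : A ∈ F),
      (⟨fun γ => m γ A, hmem A hA⟩ : lp (fun _ : Γ => ℝ) ∞) ∈ mZero Γ := by
    intro A hA
    refine Submodule.subset_span fun ε hε => ?_
    have hsub : {γ : Γ | ε ≤ |m γ A|} ⊆
        ⋃ C : genAlg (s ⟨A, hA⟩), {γ | δ ≤ |(ν C).1 γ|} := by
      intro γ hγ
      by_contra hc
      simp only [Set.mem_iUnion, Set.mem_ofPred_eq, not_exists, not_le] at hc hγ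
      have := hm0 γ ⟨A, hA⟩ fun C hC => (hc ⟨C, hC⟩).le
      simp only at this
      rw [this, abs_zero] at hγ
      linarith
    have hG := mk_genAlg_lt hκ (hcards ⟨A, hA⟩)
    refine ((mk_le_mk_of_subset hsub).trans (mk_iUnion_le _)).trans_lt ?_
    exact mul_lt_of_lt hΓ (hG.trans_le (Ordinal.cof_ord_le _))
      (iSup_lt_of_lt_cof_ord hG fun C => mk_lt_of_mem_mZero (ν C).2 δ hδ)
  classical
  refine ⟨fun A => if hA : A ∈ F then ⟨⟨fun γ => m γ A, hmem A hA⟩, hm0' A hA⟩ else 0, ?_, ?_⟩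
  · intro A hA B hB hAB
    simp only [dif_pos hA, dif_pos hB, dif_pos (hF.2.2 A hA B hB)]
    apply Subtype.ext
    apply Subtype.ext
    funext γ
    exact hm γ A hA B hB hAB
  · intro A hA
    simp only [dif_pos hA]
    exact lp.norm_le_of_forall_le (by linarith) fun γ => (hmv γ A hA).trans hδv
end

section
/- Let K be a Kalton–Roberts constant and let Γ be an infinite set. Then: (a) c₀(Γ) has the ω₁-SVM property with constant v for every v > 16K, i.e. for every v > 16K, every countable set algebra F and every 1-additive ν : F → c₀(Γ) there is a vector measure μ : F → c₀(Γ) with ‖ν(A) − μ(A)‖ ≤ v for all A ∈ F; and (b) c₀(Γ) does not have the ω₂-SVM property, i.e. there is no finite constant working for all set algebras of cardinality at most ω₁. In particular the SVM character of c₀(Γ) equals ω₂. -/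
/-!
The positive part rests on a Sobczyk-type correction. The coordinates of `ν` are scalar
1-additive maps, so the Kalton–Roberts theorem gives scalar measures `m γ` with
`|ν A γ - m γ A| ≤ K`, but `γ ↦ m γ A` need not vanish at infinity. As `ν A` vanishes at infinity,
every cluster point of `m γ` at infinity lies in the compact set `M` of measures bounded by `K`.
Since `F` is countable, `ℝ^F` is metrizable, so the distance from `m γ` to `M` tends to `0`;
subtracting from `m γ` a nearest point of `M` yields a `c₀(Γ)`-valued measure within `2K` of `ν`
(`exists_vectMeas_of_countable`).

For the negative part, let `A i`, `i : ι`, be `ℵ₁` infinite pairwise almost disjoint subsets of a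
countable subset of `Γ` (branches of the binary tree). On the finite-cofinite algebra of `ι`, put
`ν E = ∑ i ∈ E, 1_{A i} - 1_{⋃ i ∈ E, A i}` for finite `E` and `ν Eᶜ = -ν E`. The function `ν E` has
finite support and `ν` is 1-additive. If a measure `μ` is within `v` of `ν`, then at each point `x`
the sums of `1_{A i} x - μ {i} x` over finite sets of indices are at most `1 + v`, so only finitely
many `i` satisfy `1_{A i} x - μ {i} x ≥ 1/2`. Some `i` is thus never met, and then `μ {i} > 1/2`
on the infinite set `A i`, contrary to `μ {i} ∈ c₀(Γ)` (`not_exists_vectMeas_near`).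
-/

open Cardinal ENNReal

open Filter Topology

/-! ### Countable algebras -/

lemma c0_norm_le {Γ : Type} [TopologicalSpace Γ] (f : ZeroAtInftyContinuousMap Γ ℝ) {C : ℝ}
    (hC : 0 ≤ C) : ‖f‖ ≤ C ↔ ∀ x, |f x| ≤ C := by
  rw [← ZeroAtInftyContinuousMap.norm_toBCF_eq_norm, BoundedContinuousFunction.norm_le hC]
  rfl

lemma c0_abs_apply_le {Γ : Type} [TopologicalSpace Γ] (f : ZeroAtInftyContinuousMap Γ ℝ) (x : Γ) :
    |f x| ≤ ‖f‖ :=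
  (c0_norm_le f (norm_nonneg f)).1 le_rfl x

lemma IsKRConst.nonneg {K : ℝ} (hK : IsKRConst K) : 0 ≤ K := by
  obtain ⟨μ, -, h⟩ := hK Unit Set.univ ⟨trivial, fun _ _ => trivial, fun _ _ _ _ => trivial⟩ 0
    (fun _ _ _ _ _ => by simp)
  exact (abs_nonneg _).trans (h ∅ trivial)

/-- The additive functions on `F` that are bounded by `K`, as a subset of `ℝ^F`. -/
def bddMeas {Ω : Type} (F : Set (Set Ω)) (K : ℝ) : Set (F → ℝ) :=
  {p | (∀ A B C : F, Disjoint (A : Set Ω) B → (C : Set Ω) = (A : Set Ω) ∪ B → p C = p A + p B) ∧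
    ∀ A, |p A| ≤ K}

lemma isClosed_bddMeas {Ω : Type} (F : Set (Set Ω)) (K : ℝ) : IsClosed (bddMeas F K) := by
  simp only [bddMeas, Set.ofPred_and, Set.ofPred_forall]
  refine IsClosed.inter ?_ ?_
  · refine isClosed_iInter fun A => isClosed_iInter fun B => isClosed_iInter fun C =>
      isClosed_iInter fun _ => isClosed_iInter fun _ => isClosed_eq ?_ ?_ <;> fun_prop
  · exact isClosed_iInter fun A => isClosed_le (by fun_prop) (by fun_prop)

lemma isCompact_bddMeas {Ω : Type} (F : Set (Set Ω)) (K : ℝ) : IsCompact (bddMeas F K) := by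
  refine (isCompact_univ_pi (fun _ : F => isCompact_Icc (a := -K) (b := K))).of_isClosed_subset
    (isClosed_bddMeas F K) fun p hp A _ => ?_
  exact abs_le.1 (hp.2 A)

lemma exists_vectMeas_of_countable {K : ℝ} (hK : IsKRConst K)
    {Γ : Type} [TopologicalSpace Γ] [DiscreteTopology Γ] {Ω : Type} {F : Set (Set Ω)}
    (hF : IsSetAlg F) (hc : F.Countable) (ν : Set Ω → ZeroAtInftyContinuousMap Γ ℝ)
    (hν : OneAdd F ν) :
    ∃ μ : Set Ω → ZeroAtInftyContinuousMap Γ ℝ, VectMeas F μ ∧ ∀ A ∈ F, ‖ν A - μ A‖ ≤ 2 * K := by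
  classical
  have hK0 := hK.nonneg
  have h1 : ∀ γ : Γ, ∃ m : Set Ω → ℝ, VectMeas F m ∧ ∀ A ∈ F, |ν A γ - m A| ≤ K := fun γ =>
    hK Ω F hF (fun A => ν A γ) fun A hA B hB hAB =>
      (c0_abs_apply_le (ν (A ∪ B) - ν A - ν B) γ).trans (hν A hA B hB hAB)
  choose m hm hmK using h1
  have : Countable F := hc.to_subtype
  let _ : PseudoMetricSpace (F → ℝ) := UniformSpace.pseudoMetricSpace (F → ℝ)
  have hMc := isCompact_bddMeas F K
  have hMne : (bddMeas F K).Nonempty := ⟨0, by simp [bddMeas, hK0]⟩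
  set r : Γ → F → ℝ := fun γ A => m γ A with hr
  choose p hpM hp using fun γ => hMc.exists_infDist_eq_dist hMne (r γ)
  have hν0 : ∀ A, Tendsto (fun γ => ν A γ) cofinite (𝓝 0) := fun A => by
    rw [← cocompact_eq_cofinite]; exact (ν A).zero_at_infty'
  -- Along every ultrafilter at infinity, `r` converges to a point of `bddMeas F K`.
  have hdist : Tendsto (fun γ => dist (r γ) (p γ)) cofinite (𝓝 0) := by
    simp_rw [← hp]
    rw [tendsto_iff_ultrafilter]
    intro g hg
    have hbox : IsCompact
        (Set.univ.pi fun A : F => Set.Icc (-(K + ‖ν A‖)) (K + ‖ν A‖)) :=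
      isCompact_univ_pi fun _ => isCompact_Icc
    obtain ⟨q, -, hq⟩ := hbox.ultrafilter_le_nhds (g.map r) (by
      rw [le_principal_iff]
      refine Filter.mem_map.2 (Filter.univ_mem' fun γ => ?_)
      intro A _
      have h2 := abs_le.1 (hmK γ A A.2)
      have h3 := abs_le.1 (c0_abs_apply_le (ν A) γ)
      constructor <;> simp only [hr] <;> linarith)
    have hq' : Tendsto r g (𝓝 q) := hq
    have hqA : ∀ A : F, Tendsto (fun γ => m γ A) g (𝓝 (q A)) := fun A =>
      (tendsto_pi_nhds.1 hq') A
    have hqM : q ∈ bddMeas F K := by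
      refine ⟨fun A B C hAB hC => ?_, fun A => ?_⟩
      · refine tendsto_nhds_unique (hqA C) (((hqA A).add (hqA B)).congr fun γ => ?_)
        rw [hC, hm γ A A.2 B B.2 hAB]
      · have h4 : Tendsto (fun γ => |ν A γ - m γ A|) g (𝓝 |0 - q A|) :=
          (((hν0 A).mono_left hg).sub (hqA A)).abs
        have h5 := le_of_tendsto' h4 fun γ => hmK γ A A.2
        simpa using h5
    have h6 := ((Metric.continuous_infDist_pt (bddMeas F K)).tendsto q).comp hq'
    rw [Metric.infDist_zero_of_mem hqM] at h6
    exact h6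
  have hlim : ∀ A : F, Tendsto (fun γ => m γ A - p γ A) cofinite (𝓝 0) := by
    intro A
    have h7 : Tendsto (fun γ => (r γ, p γ)) cofinite (uniformity (F → ℝ)) :=
      tendsto_uniformity_iff_dist_tendsto_zero.2 hdist
    have h8 : Tendsto (fun γ => (r γ A, p γ A)) cofinite (uniformity ℝ) :=
      Tendsto.comp (Pi.uniformContinuous_proj (fun _ : F => ℝ) A) h7
    have h9 := tendsto_uniformity_iff_dist_tendsto_zero.1 h8
    rw [tendsto_zero_iff_abs_tendsto_zero]
    exact h9
  let μ : Set Ω → ZeroAtInftyContinuousMap Γ ℝ := fun A =>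
    if hA : A ∈ F then
      { toFun := fun γ => m γ A - p γ ⟨A, hA⟩
        continuous_toFun := continuous_of_discreteTopology
        zero_at_infty' := by rw [cocompact_eq_cofinite]; exact hlim ⟨A, hA⟩ }
    else 0
  have hμ : ∀ A (hA : A ∈ F) γ, μ A γ = m γ A - p γ ⟨A, hA⟩ := fun A hA γ => by
    simp only [μ, dif_pos hA]; rfl
  refine ⟨μ, fun A hA B hB hAB => ?_, fun A hA => ?_⟩
  · ext γ
    have hU := hF.2.2 A hA B hB
    rw [ZeroAtInftyContinuousMap.add_apply, hμ _ hU, hμ _ hA, hμ _ hB, hm γ A hA B hB hAB,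
      (hpM γ).1 ⟨A, hA⟩ ⟨B, hB⟩ ⟨A ∪ B, hU⟩ hAB rfl]
    ring
  · rw [c0_norm_le _ (by linarith)]
    intro γ
    rw [ZeroAtInftyContinuousMap.sub_apply, hμ _ hA]
    have h2 := abs_le.1 (hmK γ A hA)
    have h3 := abs_le.1 ((hpM γ).2 ⟨A, hA⟩)
    rw [abs_le]
    constructor <;> linarith

/-! ### Almost disjoint families -/

/-- The branches of the binary tree give continuum many, hence `ℵ₁`, infinite and pairwise almost
disjoint subsets of a countable set. -/
lemma exists_almostDisjoint (Γ : Type) [Infinite Γ] :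
    ∃ (ι : Type) (A : ι → Set Γ) (S : Set Γ), #ι = ℵ₁ ∧ S.Countable ∧ (∀ i, A i ⊆ S) ∧
      (∀ i, (A i).Infinite) ∧ ∀ i j, i ≠ j → (A i ∩ A j).Finite := by
  have hle : #((ℵ₁ : Cardinal.{0}).out) ≤ #(ℕ → Bool) := by
    simpa using aleph_one_le_continuum
  obtain ⟨x⟩ := hle
  obtain ⟨e⟩ : Nonempty (List Bool ↪ Γ) := by
    rw [← Cardinal.le_def]
    simp
  -- `b y n` is the node of level `n` on the branch `y`.
  let b : (ℕ → Bool) → ℕ → List Bool := fun y n => List.ofFn fun k : Fin n => y k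
  have hlen : ∀ y n, (b y n).length = n := fun y n => by simp [b]
  have hb : ∀ y, Function.Injective (b y) := fun y n k h => by
    rw [← hlen y n, h, hlen]
  refine ⟨_, fun i => Set.range (e ∘ b (x i)), Set.range e, Cardinal.mk_out _,
    Set.countable_range e, fun i => Set.range_comp_subset_range _ _,
    fun i => Set.infinite_range_of_injective (e.injective.comp (hb _)), fun i j hij => ?_⟩
  obtain ⟨n, hn⟩ := Function.ne_iff.1 (x.injective.ne hij)
  refine ((Set.finite_le_nat n).image (e ∘ b (x i))).subset ?_
  rintro _ ⟨⟨k, rfl⟩, ⟨l, hl⟩⟩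
  refine ⟨k, ?_, rfl⟩
  have hl' : b (x j) l = b (x i) k := e.injective hl
  have hkl : l = k := by rw [← hlen (x j) l, hl', hlen]
  subst hkl
  by_contra hlt
  simp only [Set.mem_ofPred_eq, not_le] at hlt
  have := congrFun (List.ofFn_injective hl') ⟨n, hlt⟩
  exact hn this.symm

/-! ### The finite-cofinite algebra -/

open Classical in
/-- `∑ i ∈ E, 1_{A i} - 1_{⋃ i ∈ E, A i}`. -/
noncomputable def overlap {ι Γ : Type} (A : ι → Set Γ) (E : Finset ι) (x : Γ) : ℝ :=
  (∑ i ∈ E, if x ∈ A i then 1 else 0) - if ∃ i ∈ E, x ∈ A i then 1 else 0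

lemma overlap_support_finite {ι Γ : Type} {A : ι → Set Γ}
    (hA : ∀ i j, i ≠ j → (A i ∩ A j).Finite) (E : Finset ι) :
    (Function.support (overlap A E)).Finite := by
  classical
  refine (E.offDiag.finite_toSet.biUnion (t := fun q : ι × ι => A q.1 ∩ A q.2)
    fun q hq => hA _ _ (by simpa using (Finset.mem_offDiag.1 hq).2.2)).subset ?_
  intro x hx
  by_contra hno
  simp only [Set.mem_iUnion, not_exists] at hno
  apply hx
  unfold overlap
  by_cases h : ∃ i ∈ E, x ∈ A i
  · obtain ⟨i, hi, hxi⟩ := h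
    rw [if_pos ⟨i, hi, hxi⟩, Finset.sum_eq_single_of_mem i hi, if_pos hxi, sub_self]
    intro j hj hji
    rw [if_neg]
    intro hxj
    exact hno (j, i) (by simp [hj, hi, hji]) ⟨hxj, hxi⟩
  · rw [if_neg h, Finset.sum_eq_zero, sub_self]
    intro i hi
    rw [if_neg fun hxi => h ⟨i, hi, hxi⟩]

lemma abs_overlap_union_sub_le {ι Γ : Type} [DecidableEq ι] (A : ι → Set Γ) {E G : Finset ι}
    (h : Disjoint E G) (x : Γ) :
    |overlap A (E ∪ G) x - overlap A E x - overlap A G x| ≤ 1 := by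
  classical
  unfold overlap
  rw [Finset.sum_union h]
  by_cases hE : ∃ i ∈ E, x ∈ A i <;> by_cases hG : ∃ i ∈ G, x ∈ A i
  · have hU : ∃ i ∈ E ∪ G, x ∈ A i := by
      obtain ⟨i, hi, hx⟩ := hE; exact ⟨i, Finset.mem_union_left _ hi, hx⟩
    rw [if_pos hE, if_pos hG, if_pos hU]
    ring_nf; simp
  · have hU : ∃ i ∈ E ∪ G, x ∈ A i := by
      obtain ⟨i, hi, hx⟩ := hE; exact ⟨i, Finset.mem_union_left _ hi, hx⟩
    rw [if_pos hE, if_neg hG, if_pos hU]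
    ring_nf; simp
  · have hU : ∃ i ∈ E ∪ G, x ∈ A i := by
      obtain ⟨i, hi, hx⟩ := hG; exact ⟨i, Finset.mem_union_right _ hi, hx⟩
    rw [if_neg hE, if_pos hG, if_pos hU]
    ring_nf; simp
  · have hU : ¬ ∃ i ∈ E ∪ G, x ∈ A i := by
      rintro ⟨i, hi, hx⟩
      rcases Finset.mem_union.1 hi with hi | hi
      exacts [hE ⟨i, hi, hx⟩, hG ⟨i, hi, hx⟩]
    rw [if_neg hE, if_neg hG, if_neg hU]
    ring_nf; simp

/-- The finite-cofinite algebra on `ι`. -/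
def finCofin (ι : Type) : Set (Set ι) := {E | E.Finite ∨ Eᶜ.Finite}

lemma isSetAlg_finCofin (ι : Type) : IsSetAlg (finCofin ι) := by
  refine ⟨Or.inl Set.finite_empty, fun A hA => ?_, fun A hA B hB => ?_⟩
  · rcases hA with h | h
    · exact Or.inr (by rwa [compl_compl])
    · exact Or.inl h
  · rcases hA with h | h
    · rcases hB with h' | h'
      · exact Or.inl (h.union h')
      · exact Or.inr (h'.subset (Set.compl_subset_compl.2 Set.subset_union_right))
    · exact Or.inr (h.subset (Set.compl_subset_compl.2 Set.subset_union_left))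

lemma mk_finCofin_le (ι : Type) [Infinite ι] : #(finCofin ι) ≤ #ι := by
  have hs : Function.Surjective (fun s : Finset ι ⊕ Finset ι =>
      (Sum.elim (fun E : Finset ι => ⟨(E : Set ι), Or.inl E.finite_toSet⟩)
        (fun E : Finset ι => ⟨(E : Set ι)ᶜ, Or.inr (by rw [compl_compl]; exact E.finite_toSet)⟩) s :
          finCofin ι)) := by
    rintro ⟨E, h | h⟩
    · exact ⟨Sum.inl h.toFinset, by simp⟩
    · exact ⟨Sum.inr h.toFinset, by simp⟩
  refine (Cardinal.mk_le_of_surjective hs).trans ?_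
  simp [Cardinal.add_eq_self (Cardinal.aleph0_le_mk ι)]

lemma not_exists_vectMeas_near (Γ : Type) [TopologicalSpace Γ] [DiscreteTopology Γ] [Infinite Γ] :
    ∃ (ι : Type) (ν : Set ι → ZeroAtInftyContinuousMap Γ ℝ), #(finCofin ι) < ℵ_ 2 ∧
      OneAdd (finCofin ι) ν ∧ ∀ v : ℝ, ¬ ∃ μ : Set ι → ZeroAtInftyContinuousMap Γ ℝ,
        VectMeas (finCofin ι) μ ∧ ∀ E ∈ finCofin ι, ‖ν E - μ E‖ ≤ v := by
  classical
  obtain ⟨ι, A, S, hι, hS, hAS, hAinf, hAd⟩ := exists_almostDisjoint Γ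
  have hunc : Uncountable ι := by
    rw [← Cardinal.aleph0_lt_mk_iff, hι]; exact Cardinal.aleph0_lt_aleph_one
  let g : Finset ι → ZeroAtInftyContinuousMap Γ ℝ := fun E =>
    { toFun := overlap A E
      continuous_toFun := continuous_of_discreteTopology
      zero_at_infty' := by
        rw [cocompact_eq_cofinite]
        refine tendsto_const_nhds.congr' ?_
        filter_upwards [(overlap_support_finite hAd E).compl_mem_cofinite] with x hx
        exact (Function.notMem_support.1 hx).symm }
  have hg : ∀ E x, g E x = overlap A E x := fun _ _ => rfl
  have hgadd : ∀ E G, Disjoint E G → ‖g (E ∪ G) - g E - g G‖ ≤ 1 := fun E G h => by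
    rw [c0_norm_le _ zero_le_one]
    exact fun x => abs_overlap_union_sub_le A h x
  let ν : Set ι → ZeroAtInftyContinuousMap Γ ℝ := fun E =>
    if h : E.Finite then g h.toFinset else if h' : Eᶜ.Finite then -g h'.toFinset else 0
  have hνfin : ∀ E : Finset ι, ν E = g E := fun E => by
    simp only [ν, dif_pos E.finite_toSet]; simp
  have hνcof : ∀ E : Finset ι, ν (E : Set ι)ᶜ = -g E := fun E => by
    have h : ¬ ((E : Set ι)ᶜ).Finite := E.finite_toSet.infinite_compl
    have hcc : ((E : Set ι)ᶜᶜ).Finite := by rw [compl_compl]; exact E.finite_toSet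
    simp only [ν, dif_neg h, dif_pos hcc]; simp
  -- A finite set disjoint from a cofinite one: this is additivity on the complement of the latter.
  have hmixed : ∀ E G : Finset ι, Disjoint (E : Set ι) (G : Set ι)ᶜ →
      ‖ν (E ∪ (G : Set ι)ᶜ) - ν E - ν (G : Set ι)ᶜ‖ ≤ 1 := fun E G h => by
    have hsub : E ⊆ G := by
      rw [Set.disjoint_compl_right_iff_subset] at h; exact_mod_cast h
    have hU : (E : Set ι) ∪ (G : Set ι)ᶜ = ((G \ E : Finset ι) : Set ι)ᶜ := by
      ext i; simp [or_comm, imp_iff_not_or]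
    rw [hU, hνcof, hνcof, hνfin]
    have h2 := hgadd E (G \ E) Finset.disjoint_sdiff
    rw [Finset.union_sdiff_of_subset hsub] at h2
    convert h2 using 2
    abel
  refine ⟨ι, ν, ?_, ?_, ?_⟩
  · refine (mk_finCofin_le ι).trans_lt ?_
    rw [hι]
    exact Cardinal.aleph_lt_aleph.2 (by norm_num)
  · intro E hE G hG hEG
    rcases hE with hE | hE
    · lift E to Finset ι using hE
      rcases hG with hG | hG
      · lift G to Finset ι using hG
        rw [← Finset.coe_union, hνfin, hνfin, hνfin]
        exact hgadd E G (by exact_mod_cast hEG)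
      · obtain ⟨G', hG'⟩ : ∃ G' : Finset ι, (G' : Set ι)ᶜ = G := ⟨hG.toFinset, by simp⟩
        subst hG'
        exact hmixed E G' hEG
    · -- Two cofinite sets in an infinite type are never disjoint, so `G` is finite.
      obtain ⟨E', hE'⟩ : ∃ E' : Finset ι, (E' : Set ι)ᶜ = E := ⟨hE.toFinset, by simp⟩
      subst hE'
      have hGE : G ⊆ E' := by
        rwa [disjoint_comm, Set.disjoint_compl_right_iff_subset] at hEG
      lift G to Finset ι using E'.finite_toSet.subset hGE
      have h3 := hmixed G E' hEG.symm
      rw [Set.union_comm] at h3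
      rwa [sub_right_comm]
  · rintro v ⟨μ, hμ, hv⟩
    have hfin : ∀ E : Finset ι, (E : Set ι) ∈ finCofin ι := fun E => Or.inl E.finite_toSet
    have hμsum : ∀ (E : Finset ι) (x : Γ), μ E x = ∑ i ∈ E, μ {i} x := by
      intro E x
      induction E using Finset.induction_on with
      | empty =>
        have h0 := hμ ∅ (Or.inl Set.finite_empty) ∅ (Or.inl Set.finite_empty) (by simp)
        have h0' : μ ∅ = 0 := by simpa using h0
        simp [h0']
      | insert i E hi ih =>
        rw [Finset.sum_insert hi, ← ih, Finset.coe_insert, Set.insert_eq,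
          hμ {i} (Or.inl (Set.finite_singleton i)) E (hfin E) (by simpa using hi)]
        rfl
    let D : Γ → ι → ℝ := fun x i => (if x ∈ A i then 1 else 0) - μ {i} x
    have hD : ∀ (x : Γ) (E : Finset ι), ∑ i ∈ E, D x i ≤ 1 + v := fun x E => by
      have h1 := (c0_abs_apply_le (ν E - μ E) x).trans (hv E (hfin E))
      rw [ZeroAtInftyContinuousMap.sub_apply, hνfin, hg, hμsum] at h1
      have h2 := (abs_le.1 h1).2
      unfold overlap at h2
      simp only [D, Finset.sum_sub_distrib]
      have h3 : (if ∃ i ∈ E, x ∈ A i then (1 : ℝ) else 0) ≤ 1 := by split_ifs <;> norm_num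
      linarith
    have hDfin : ∀ x, {i | 1 / 2 ≤ D x i}.Finite := fun x => by
      by_contra hinf
      obtain ⟨n, hn⟩ := exists_nat_gt (2 * (1 + v))
      obtain ⟨E, hE, hcard⟩ := Set.Infinite.exists_subset_card_eq hinf n
      have h1 : ∑ i ∈ E, (1 / 2 : ℝ) ≤ ∑ i ∈ E, D x i := Finset.sum_le_sum fun i hi => hE hi
      rw [Finset.sum_const, hcard, nsmul_eq_mul] at h1
      linarith [hD x E]
    have hcount : (⋃ x ∈ S, {i | 1 / 2 ≤ D x i}).Countable :=
      hS.biUnion fun x _ => (hDfin x).countable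
    obtain ⟨i, hi⟩ : ∃ i, i ∉ ⋃ x ∈ S, {i | 1 / 2 ≤ D x i} := by
      by_contra! hall
      exact Set.not_countable_univ (hcount.mono fun i _ => hall i)
    have hz : Tendsto (fun x => μ {i} x) cofinite (𝓝 0) := by
      rw [← cocompact_eq_cofinite]; exact (μ {i}).zero_at_infty'
    have hev : ∀ᶠ x in cofinite, μ {i} x < 1 / 2 := hz.eventually (gt_mem_nhds (by norm_num))
    obtain ⟨x, hxA, hx⟩ := ((frequently_cofinite_iff_infinite.2 (hAinf i)).and_eventually hev).exists
    apply hi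
    simp only [Set.mem_iUnion]
    refine ⟨x, hAS i hxA, ?_⟩
    have hxA' : x ∈ A i := hxA
    simp only [D, Set.mem_ofPred_eq, if_pos hxA']
    linarith

/-- for an infinite set Γ, c₀(Γ) has the ω₁-SVM property with any
constant v > 16K, fails the ω₂-SVM property, and its SVM character equals ω₂. -/
theorem stmt_15 (K : ℝ) (hK : IsKRConst K)
    (Γ : Type) [TopologicalSpace Γ] [DiscreteTopology Γ] [Infinite Γ] :
    (∀ v : ℝ, 16 * K < v →
      ∀ (Ω : Type) (F : Set (Set Ω)), IsSetAlg F → F.Countable →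
        ∀ ν : Set Ω → ZeroAtInftyContinuousMap Γ ℝ, OneAdd F ν →
          ∃ μ : Set Ω → ZeroAtInftyContinuousMap Γ ℝ,
            VectMeas F μ ∧ ∀ A ∈ F, ‖ν A - μ A‖ ≤ v) ∧
    (¬ ∃ v : ℝ, HasKappaSVMBound (ZeroAtInftyContinuousMap Γ ℝ) (Cardinal.aleph 2) v) ∧
    (∀ κ : Cardinal, κ < Cardinal.aleph 2 →
      ∃ v : ℝ, HasKappaSVMBound (ZeroAtInftyContinuousMap Γ ℝ) κ v) := by
  refine ⟨?_, ?_, ?_⟩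
  · intro v hv Ω F hF hc ν hν
    obtain ⟨μ, hμ, hb⟩ := exists_vectMeas_of_countable hK hF hc ν hν
    exact ⟨μ, hμ, fun A hA => (hb A hA).trans (by linarith [hK.nonneg])⟩
  · rintro ⟨v, hv⟩
    obtain ⟨ι, ν, hcard, hν, hno⟩ := not_exists_vectMeas_near Γ
    exact hno v (hv ι _ (isSetAlg_finCofin ι) hcard ν hν)
  · intro κ hκ
    refine ⟨2 * K, fun Ω F hF hcard ν hν => exists_vectMeas_of_countable hK hF ?_ ν hν⟩
    have h2 : (ℵ_ 2 : Cardinal.{0}) = Order.succ ℵ₁ := by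
      rw [Cardinal.succ_aleph, one_add_one_eq_two]
    have hle : κ ≤ ℵ₁ := Order.lt_succ_iff.1 (h2 ▸ hκ)
    rw [← Cardinal.le_aleph0_iff_set_countable, ← Order.lt_succ_iff, Cardinal.succ_aleph0]
    exact hcard.trans_le hle
end

section
/- Let K be a Kalton–Roberts constant, let {N_γ}_{γ∈Γ} be an almost disjoint family of infinite subsets of ℕ with |Γ| equal to the cardinality of the continuum, and let JL∞ be the associated Johnson–Lindenstrauss space. Then: (a) JL∞ has the ω₁-SVM property with constant v for every v > 120K, i.e. for every v > 120K, every countable set algebra F and every 1-additive ν : F → JL∞ there is a vector measure μ : F → JL∞ with ‖ν(A) − μ(A)‖ ≤ v for all A ∈ F; and (b) JL∞ does not have the ω₂-SVM property, i.e. there is no finite constant working for all set algebras of cardinality at most ω₁. In particular the SVM character of JL∞ equals ω₂. -/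
/-!
**Countable algebras.** The range of `ν` lies over countably many members `N (g i)` of the family,
which become disjoint after deleting a finite part from each. The part of `JL∞` over them is
`c₀ ⊕ c₀`: a vector is the sum of its limits along the `N (g i)`, spread out over these sets, and a
null sequence (`spread`, `mem_JLinf_iff`). Taking limits has norm one and the remainder at most
doubles the norm. So it suffices to treat `c₀`-valued maps (`c0_approx`): the Kalton–Roberts theorem
in each coordinate gives real measures, and an argument in the manner of Veech's proof of Sobczyk's
theorem corrects them, at the cost of another `K`, so that they tend to zero pointwise on the
algebra. The total is `2K + 4K = 6K ≤ 120K` (`JLinf_countable`).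

**Algebras of cardinality `ℵ₁`.** Choose `ℵ₁` many of the sets `N α` and an infinite, co-infinite
subset `M α` of each. Elements of `JL∞` have limits along `N α`, so `1_{M α} ∉ JL∞`
(`indicator_not_mem`). On finite sets of indices, `∑_{α ∈ A} 1_{M α} - 1_{⋃_{α ∈ A} M α}` is a
1-additive map into the finitely supported sequences, and it extends to the finite-cofinite algebra.
If a measure `μ` approximates it, then `∑_{α ∈ A} 1_{M α} - μ A` is uniformly bounded, so in each
coordinate it vanishes at all but countably many points `{α}`, forcing `1_{M α} = μ {α} ∈ JL∞` for
some `α` (`JLinf_not_aleph_two`).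
-/

open Cardinal ENNReal

/-- The Johnson–Lindenstrauss space associated with an almost disjoint family
N : the closed linear span inside ℓ∞ of c₀ together with the indicators of the
sets N γ. -/
noncomputable def JLinf (Γ : Type) (N : Γ → Set ℕ) :
    Submodule ℝ ↥(lp (fun _ : ℕ => ℝ) ⊤) :=
  (Submodule.span ℝ
    ({x : ↥(lp (fun _ : ℕ => ℝ) ⊤) | ∀ ε : ℝ, 0 < ε → {n : ℕ | ε ≤ |x n|}.Finite} ∪
     {x | ∃ γ : Γ, ∀ n : ℕ, x n = Set.indicator (N γ) (fun _ => (1 : ℝ)) n})).topologicalClosure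

open Filter Topology

/-! ### Countable algebras and null sequences -/

/-- The `c₀` case. Coordinatewise approximation gives real measures `m k` within `K` of `ν k`, whose
distance to the compact set `M` of measures bounded by `K` tends to `0` as `k → ∞`, in a metric for
pointwise convergence on the countable algebra. Subtracting nearest points of `M` makes the sequence
tend to `0`, at the price of doubling the constant. -/
lemma c0_approx {K : ℝ} (hK : IsKRConst K) {Ω : Type} {F : Set (Set Ω)} (hF : IsSetAlg F)
    (hc : F.Countable) (ν : ℕ → Set Ω → ℝ) (hν : ∀ k, OneAdd F (ν k))
    (h0 : ∀ A ∈ F, Tendsto (fun k => ν k A) atTop (𝓝 0)) :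
    ∃ μ : ℕ → Set Ω → ℝ, (∀ k, VectMeas F (μ k)) ∧
      (∀ A ∈ F, Tendsto (fun k => μ k A) atTop (𝓝 0)) ∧
      ∀ k, ∀ A ∈ F, |ν k A - μ k A| ≤ 2 * K := by
  choose m hmV hmK using fun k => hK Ω F hF (ν k) (hν k)
  have : Countable F := hc
  have hK0 : 0 ≤ K := (abs_nonneg _).trans (hmK 0 ∅ hF.1)
  let M : Set (F → ℝ) := {l | (∀ A B C : F, Disjoint (A : Set Ω) B → (C : Set Ω) = (A : Set Ω) ∪ B →
      l C = l A + l B) ∧ ∀ A, |l A| ≤ K}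
  have hMc : IsCompact M := by
    have hsub : M ⊆ Set.univ.pi (fun _ : F => Set.Icc (-K) K) := fun l hl A _ => abs_le.1 (hl.2 A)
    refine (isCompact_univ_pi (fun _ => isCompact_Icc)).of_isClosed_subset ?_ hsub
    simp only [M, Set.ofPred_and, Set.ofPred_forall]
    refine IsClosed.inter ?_ ?_
    · refine isClosed_iInter fun A => isClosed_iInter fun B => isClosed_iInter fun C =>
        isClosed_iInter fun _ => isClosed_iInter fun _ => isClosed_eq (by fun_prop) (by fun_prop)
    · exact isClosed_iInter fun A => isClosed_le (by fun_prop) (by fun_prop)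
  have hMne : M.Nonempty := ⟨0, by intros; simp, fun A => by simpa using hK0⟩
  let _ : MetricSpace (F → ℝ) := TopologicalSpace.metrizableSpaceMetric (F → ℝ)
  let mF : ℕ → F → ℝ := fun k A => m k A
  choose l hlM hl using fun k => hMc.exists_infDist_eq_dist hMne (mF k)
  -- limits of `mF` along ultrafilters lie in `M`, so the nearest points `l k` have the same limits
  have key : ∀ U : Ultrafilter ℕ, (U : Filter ℕ) ≤ atTop →
      ∃ p : F → ℝ, Tendsto mF U (𝓝 p) ∧ Tendsto l U (𝓝 p) := by
    intro U hU
    have hb : ∀ A : F, ∃ p : ℝ, Tendsto (fun k => mF k A) U (𝓝 p) ∧ |p| ≤ K := by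
      intro A
      have hev : ∀ᶠ k in (U : Filter ℕ), mF k A ∈ Set.Icc (-(K + 1)) (K + 1) := by
        have h1 := (h0 A A.2).mono_left hU
        filter_upwards [h1 (Metric.ball_mem_nhds 0 one_pos)] with k hk
        have h2 := hmK k A A.2
        simp only [Set.mem_preimage, Metric.mem_ball, dist_zero_right, Real.norm_eq_abs] at hk
        rw [abs_lt] at hk
        rw [abs_le] at h2
        constructor <;> simp only [mF] <;> linarith
      obtain ⟨p, -, hp⟩ := isCompact_Icc.ultrafilter_le_nhds (U.map fun k => mF k A)
        (le_principal_iff.2 hev)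
      have hp' : Tendsto (fun k => mF k A) U (𝓝 p) := hp
      refine ⟨p, hp', ?_⟩
      have h3 : Tendsto (fun k => |ν k A - mF k A|) U (𝓝 |0 - p|) :=
        (((h0 A A.2).mono_left hU).sub hp').abs
      have := le_of_tendsto h3 (Eventually.of_forall fun k => hmK k A A.2)
      simpa using this
    choose p hp hpK using hb
    have hpt : Tendsto mF U (𝓝 p) := tendsto_pi_nhds.2 hp
    have hpM : p ∈ M := by
      refine ⟨fun A B C hAB hC => ?_, hpK⟩
      refine tendsto_nhds_unique (hp C) (((hp A).add (hp B)).congr fun k => ?_)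
      simp only [mF, hC]
      exact (hmV k A A.2 B B.2 hAB).symm
    have hd : Tendsto (fun k => dist (mF k) (l k)) U (𝓝 0) := by
      have h4 : Tendsto (fun k => Metric.infDist (mF k) M) U (𝓝 (Metric.infDist p M)) :=
        ((Metric.continuous_infDist_pt M).tendsto p).comp hpt
      rw [Metric.infDist_zero_of_mem hpM] at h4
      exact h4.congr hl
    exact ⟨p, hpt, hpt.congr_dist hd⟩
  classical
  refine ⟨fun k A => if h : A ∈ F then m k A - l k ⟨A, h⟩ else 0, ?_, ?_, ?_⟩
  · intro k A hA B hB hAB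
    have h1 := hmV k A hA B hB hAB
    have h2 := (hlM k).1 ⟨A, hA⟩ ⟨B, hB⟩ ⟨A ∪ B, hF.2.2 A hA B hB⟩ hAB rfl
    simp only [hA, hB, hF.2.2 A hA B hB, dif_pos]
    rw [h1, h2]; ring
  · intro A hA
    simp only [hA, dif_pos]
    rw [tendsto_iff_ultrafilter]
    intro U hU
    obtain ⟨p, h1, h2⟩ := key U hU
    have := (tendsto_pi_nhds.1 h1 ⟨A, hA⟩).sub (tendsto_pi_nhds.1 h2 ⟨A, hA⟩)
    rw [sub_self] at this
    exact this
  · intro k A hA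
    simp only [hA, dif_pos]
    have h1 := abs_le.1 (hmK k A hA)
    have h2 := abs_le.1 ((hlM k).2 ⟨A, hA⟩)
    rw [abs_le]; constructor <;> linarith [h1.1, h1.2, h2.1, h2.2]

/-! ### Membership in the Johnson–Lindenstrauss space -/

lemma lp_sum_apply {ι : Type*} (s : Finset ι) (f : ι → ↥(lp (fun _ : ℕ => ℝ) ⊤)) (n : ℕ) :
    (∑ i ∈ s, f i) n = ∑ i ∈ s, f i n := by
  rw [lp.coeFn_sum]
  exact Finset.sum_apply n s _

/-- An element of `ℓ∞` lies in `JL∞` iff it is, up to every `ε > 0` and finitely many coordinates, a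
finite linear combination of the indicators. -/
lemma mem_JLinf_iff {Γ : Type} {N : Γ → Set ℕ} (x : ↥(lp (fun _ : ℕ => ℝ) ⊤)) :
    x ∈ JLinf Γ N ↔ ∀ ε : ℝ, 0 < ε → ∃ (s : Finset Γ) (c : Γ → ℝ),
      {n : ℕ | ε ≤ |x n - ∑ γ ∈ s, c γ * (N γ).indicator (fun _ => (1 : ℝ)) n|}.Finite := by
  classical
  have hspan : ∀ y ∈ Submodule.span ℝ
      ({x : ↥(lp (fun _ : ℕ => ℝ) ⊤) | ∀ ε : ℝ, 0 < ε → {n : ℕ | ε ≤ |x n|}.Finite} ∪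
       {x | ∃ γ : Γ, ∀ n : ℕ, x n = Set.indicator (N γ) (fun _ => (1 : ℝ)) n}),
      ∃ f : Γ →₀ ℝ, ∀ ε : ℝ, 0 < ε →
      {n : ℕ | ε ≤ |y n - f.sum fun γ c => c * (N γ).indicator (fun _ => (1 : ℝ)) n|}.Finite := by
    intro y hy
    induction hy using Submodule.span_induction with
    | mem y hy =>
      rcases hy with hy | ⟨γ, hγ⟩
      · exact ⟨0, by simpa using hy⟩
      · refine ⟨Finsupp.single γ 1, fun ε hε => ?_⟩
        simp [hγ, hε.not_ge]
    | zero => exact ⟨0, fun ε hε => by simp [hε.not_ge]⟩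
    | add y z _ _ hy hz =>
      obtain ⟨f, hf⟩ := hy
      obtain ⟨g, hg⟩ := hz
      refine ⟨f + g, fun ε hε => ((hf (ε / 2) (half_pos hε)).union
        (hg (ε / 2) (half_pos hε))).subset fun n hn => ?_⟩
      rw [Set.mem_ofPred_eq, Finsupp.sum_add_index' (by simp) (by intros; ring)] at hn
      by_contra hcon
      simp only [Set.mem_union, Set.mem_ofPred_eq, not_or, not_le] at hcon
      have h3 := abs_lt.1 hcon.1
      have h4 := abs_lt.1 hcon.2
      simp only [lp.coeFn_add, Pi.add_apply] at hn
      refine absurd hn (not_le.2 (abs_lt.2 ?_))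
      constructor <;> linarith [h3.1, h3.2, h4.1, h4.2]
    | smul a y _ hy =>
      obtain ⟨f, hf⟩ := hy
      refine ⟨a • f, fun ε hε => (hf (ε / (|a| + 1)) (by positivity)).subset fun n hn => ?_⟩
      rw [Set.mem_ofPred_eq, Finsupp.sum_smul_index' (by simp)] at hn
      simp only [lp.coeFn_smul, Pi.smul_apply, smul_eq_mul, mul_assoc] at hn
      rw [← Finsupp.mul_sum, ← mul_sub, abs_mul] at hn
      rw [Set.mem_ofPred_eq, div_le_iff₀ (by positivity)]
      nlinarith [abs_nonneg (y n - f.sum fun γ c => c * (N γ).indicator (fun _ => (1 : ℝ)) n)]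
  constructor
  · intro hx ε hε
    rw [JLinf, ← SetLike.mem_coe, Submodule.topologicalClosure_coe, Metric.mem_closure_iff] at hx
    obtain ⟨y, hy, hxy⟩ := hx (ε / 2) (half_pos hε)
    obtain ⟨f, hf⟩ := hspan y hy
    refine ⟨f.support, f, (hf (ε / 2) (half_pos hε)).subset fun n hn => ?_⟩
    have h1 : ‖(x - y) n‖ ≤ ‖x - y‖ := lp.norm_apply_le_norm ENNReal.top_ne_zero _ n
    rw [← dist_eq_norm, Real.norm_eq_abs, lp.coeFn_sub, Pi.sub_apply] at h1
    by_contra hcon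
    simp only [Set.mem_ofPred_eq, not_le] at hcon hn
    have h3 := abs_lt.1 (h1.trans_lt hxy)
    have h4 := abs_lt.1 hcon
    simp only [Finsupp.sum] at h4
    refine absurd hn (not_le.2 (abs_lt.2 ?_))
    constructor <;> linarith [h3.1, h3.2, h4.1, h4.2]
  · intro h
    rw [JLinf, ← SetLike.mem_coe, Submodule.topologicalClosure_coe, Metric.mem_closure_iff]
    intro ε hε
    obtain ⟨s, c, hs⟩ := h (ε / 2) (half_pos hε)
    let e : Γ → ↥(lp (fun _ : ℕ => ℝ) ⊤) := fun γ =>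
      ⟨(N γ).indicator (fun _ => (1 : ℝ)), memℓp_infty ⟨1, by
        rintro _ ⟨n, rfl⟩
        by_cases hn : n ∈ N γ <;> simp [hn]⟩⟩
    have he : ∀ γ n, e γ n = (N γ).indicator (fun _ => (1 : ℝ)) n := fun _ _ => rfl
    let w : ↥(lp (fun _ : ℕ => ℝ) ⊤) := x - ∑ γ ∈ s, c γ • e γ
    have hw : ∀ n, w n = x n - ∑ γ ∈ s, c γ * (N γ).indicator (fun _ => (1 : ℝ)) n := by
      intro n
      simp only [w, lp.coeFn_sub, Pi.sub_apply, lp_sum_apply, lp.coeFn_smul, Pi.smul_apply,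
        smul_eq_mul, he]
    -- the finitely many large coordinates of the error are moved into the `c₀` part
    let z : ↥(lp (fun _ : ℕ => ℝ) ⊤) :=
      ⟨fun n => if ε / 2 ≤ |w n| then w n else 0, memℓp_infty ⟨‖w‖, by
        rintro _ ⟨n, rfl⟩
        have := lp.norm_apply_le_norm ENNReal.top_ne_zero w n
        dsimp only
        split_ifs
        · exact this
        · simp⟩⟩
    have hz : ∀ n, z n = if ε / 2 ≤ |w n| then w n else 0 := fun _ => rfl
    refine ⟨z + ∑ γ ∈ s, c γ • e γ, ?_, ?_⟩
    · refine Submodule.add_mem _ (Submodule.subset_span (Or.inl fun δ hδ => ?_))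
        (Submodule.sum_mem _ fun γ _ => Submodule.smul_mem _ _
          (Submodule.subset_span (Or.inr ⟨γ, he γ⟩)))
      refine hs.subset fun n hn => ?_
      rw [Set.mem_ofPred_eq, ← hw]
      by_contra hcon
      rw [Set.mem_ofPred_eq, hz, if_neg hcon] at hn
      simp at hn
      linarith
    · have : x - (z + ∑ γ ∈ s, c γ • e γ) = w - z := by simp only [w]; abel
      rw [dist_eq_norm, this]
      refine lt_of_le_of_lt (lp.norm_le_of_forall_le (half_pos hε).le fun n => ?_)
        (half_lt_self hε)
      rw [lp.coeFn_sub, Pi.sub_apply, hz, Real.norm_eq_abs]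
      split_ifs with hn
      · simpa using (half_pos hε).le
      · simpa using (not_le.1 hn).le

/-! ### The countable case -/

/-- `spread N l` takes the value `l i` on the part of `N i` outside `N 0, …, N (i - 1)`, and `0` off
`⋃ i, N i`: it is `∑ i, l i • 1_{D i}` for the disjointification `D` of `N`. -/
noncomputable def spread (N : ℕ → Set ℕ) (l : ℕ → ℝ) (n : ℕ) : ℝ :=
  open Classical in if h : ∃ i, n ∈ N i then l (Nat.find h) else 0

/-- For an almost disjoint sequence, disjointifying changes a finite linear combination of the
indicators in only finitely many coordinates. -/
lemma spread_finite {N : ℕ → Set ℕ} (hN : ∀ i j, i ≠ j → (N i ∩ N j).Finite)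
    (t : Finset ℕ) (c : ℕ → ℝ) :
    {n | ∑ i ∈ t, c i * (N i).indicator (fun _ => (1 : ℝ)) n ≠
      spread N (fun i => if i ∈ t then c i else 0) n}.Finite := by
  classical
  have hfin : (⋃ i ∈ t, ⋃ j ∈ Finset.range i, N i ∩ N j).Finite :=
    t.finite_toSet.biUnion fun i _ => (Finset.range i).finite_toSet.biUnion fun j hj =>
      hN i j (Finset.mem_range.1 hj).ne'
  refine hfin.subset fun n hn => ?_
  by_contra hcon
  simp only [Set.mem_iUnion, not_exists, Finset.mem_range, Set.mem_inter_iff, not_and] at hcon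
  refine hn ?_
  by_cases h : ∃ i, n ∈ N i
  · rw [spread, dif_pos h, ← Finset.sum_ite_eq t (Nat.find h) c]
    refine Finset.sum_congr rfl fun i hi => ?_
    by_cases hni : n ∈ N i
    · have : Nat.find h = i := by
        refine le_antisymm (Nat.find_min' h hni) (not_lt.1 fun hlt => ?_)
        exact hcon i hi _ hlt hni (Nat.find_spec h)
      simp [hni, this]
    · have : Nat.find h ≠ i := fun h' => hni (h' ▸ Nat.find_spec h)
      simp [hni, this]
  · rw [spread, dif_neg h]
    push Not at h
    exact Finset.sum_eq_zero fun i _ => by simp [h i]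

/-- On `N i`, `spread N l` is eventually equal to `l i`. -/
lemma spread_eventually {N : ℕ → Set ℕ} (hN : ∀ i j, i ≠ j → (N i ∩ N j).Finite) (i : ℕ)
    (l : ℕ → ℝ) : ∀ᶠ n in cofinite ⊓ 𝓟 (N i), spread N l n = l i := by
  classical
  have hfin : (⋃ j ∈ Finset.range i, N i ∩ N j).Finite :=
    (Finset.range i).finite_toSet.biUnion fun j hj => hN i j (Finset.mem_range.1 hj).ne'
  rw [eventually_inf_principal]
  filter_upwards [hfin.compl_mem_cofinite] with n hn hni
  have h : ∃ i, n ∈ N i := ⟨i, hni⟩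
  rw [spread, dif_pos h]
  congr 1
  refine le_antisymm (Nat.find_min' h hni) (not_lt.1 fun hlt => hn ?_)
  simp only [Set.mem_iUnion, Finset.mem_range]
  exact ⟨_, hlt, hni, Nat.find_spec h⟩

/-- A pointwise relation between three families of coefficients that also holds for zero
coefficients passes to `spread`. -/
lemma spread_rel {N : ℕ → Set ℕ} {a b c : ℕ → ℝ} (P : ℝ → ℝ → ℝ → Prop) (h0 : P 0 0 0)
    (h : ∀ i, P (a i) (b i) (c i)) (n : ℕ) :
    P (spread N a n) (spread N b n) (spread N c n) := by
  unfold spread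
  split_ifs
  · exact h _
  · exact h0

/-- Part (a). The values of `ν` live over countably many indices `g i`. Over these, `JL∞` splits as
a `c₀` of limits along the sets `N (g i)`, embedded by `spread`, plus the `c₀` of null sequences;
`c0_approx` applies to both summands, with constants `2 * K` and `4 * K`. -/
lemma JLinf_countable {K : ℝ} (hK : IsKRConst K)
    {Γ : Type} [Infinite Γ] {N : Γ → Set ℕ} (hNinf : ∀ γ : Γ, (N γ).Infinite)
    (hNad : ∀ γ δ : Γ, γ ≠ δ → (N γ ∩ N δ).Finite)
    {Ω : Type} {F : Set (Set Ω)} (hF : IsSetAlg F) (hc : F.Countable)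
    (ν : Set Ω → ↥(JLinf Γ N)) (hν : OneAdd F ν) :
    ∃ μ : Set Ω → ↥(JLinf Γ N), VectMeas F μ ∧ ∀ A ∈ F, ‖ν A - μ A‖ ≤ 6 * K := by
  classical
  have hK0 : 0 ≤ K := by
    obtain ⟨m, -, hm⟩ := hK Ω F hF (fun _ => 0) (fun A _ B _ _ => by simp)
    exact (abs_nonneg _).trans (hm ∅ hF.1)
  let x : Set Ω → ℕ → ℝ := fun A n => (ν A : ↥(lp (fun _ : ℕ => ℝ) ⊤)) n
  have hxb : ∀ A n, |x A n| ≤ ‖ν A‖ := fun A n =>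
    lp.norm_apply_le_norm ENNReal.top_ne_zero (ν A : ↥(lp (fun _ : ℕ => ℝ) ⊤)) n
  have hxadd : ∀ A ∈ F, ∀ B ∈ F, Disjoint A B → ∀ n, |x (A ∪ B) n - x A n - x B n| ≤ 1 := by
    intro A hA B hB hAB n
    exact (lp.norm_apply_le_norm ENNReal.top_ne_zero
      ((ν (A ∪ B) - ν A - ν B : ↥(JLinf Γ N)) : ↥(lp (fun _ : ℕ => ℝ) ⊤)) n).trans
      (hν A hA B hB hAB)
  have happ : ∀ A, ∀ m : ℕ, ∃ (s : Finset Γ) (c : Γ → ℝ), {n : ℕ | 1 / ((m : ℝ) + 1) ≤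
      |x A n - ∑ γ ∈ s, c γ * (N γ).indicator (fun _ => (1 : ℝ)) n|}.Finite :=
    fun A m => (mem_JLinf_iff _).1 (ν A).2 _ Nat.one_div_pos_of_nat
  choose s c hsc using happ
  -- an injective enumeration `g` of countably many indices covering all the finsets `s A m`
  obtain ⟨g, hginj, hg⟩ : ∃ g : ℕ → Γ, Function.Injective g ∧
      ∀ A ∈ F, ∀ m, ∀ γ ∈ s A m, γ ∈ Set.range g := by
    let S : Set Γ := (⋃ A ∈ F, ⋃ m, (s A m : Set Γ)) ∪ Set.range (Infinite.natEmbedding Γ)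
    have hS : S.Countable := (hc.biUnion fun A _ => Set.countable_iUnion fun m =>
      (s A m).countable_toSet).union (Set.countable_range _)
    have : Countable S := hS
    have : Infinite S := ((Set.infinite_range_of_injective
      (Infinite.natEmbedding Γ).injective).mono Set.subset_union_right).to_subtype
    obtain ⟨_⟩ := nonempty_denumerable S
    refine ⟨fun i => ((Denumerable.eqv S).symm i : Γ),
      Subtype.val_injective.comp (Equiv.injective _), fun A hA m γ hγ => ?_⟩
    have hγS : γ ∈ S := Or.inl (Set.mem_biUnion hA (Set.mem_iUnion.2 ⟨m, hγ⟩))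
    exact ⟨Denumerable.eqv S ⟨γ, hγS⟩, by simp⟩
  let D : ℕ → Set ℕ := fun i => N (g i)
  have hD : ∀ i j, i ≠ j → (D i ∩ D j).Finite := fun i j hij => hNad _ _ (hginj.ne hij)
  have happ' : ∀ A ∈ F, ∀ ε : ℝ, 0 < ε → ∃ (t : Finset ℕ) (a : ℕ → ℝ), (∀ i ∉ t, a i = 0) ∧
      {n : ℕ | ε ≤ |x A n - spread D a n|}.Finite := by
    intro A hA ε hε
    obtain ⟨m, hm⟩ := exists_nat_one_div_lt hε
    obtain ⟨t, ht⟩ : ∃ t : Finset ℕ, t.image g = s A m := by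
      refine ⟨(s A m).preimage g hginj.injOn, ?_⟩
      rw [Finset.image_preimage]
      exact Finset.filter_true_of_mem fun γ hγ => hg A hA m γ hγ
    refine ⟨t, fun i => if i ∈ t then c A m (g i) else 0, fun i hi => if_neg hi, ?_⟩
    refine ((hsc A m).union (spread_finite hD t (fun i => c A m (g i)))).subset fun n hn => ?_
    by_contra hcon
    simp only [Set.mem_union, Set.mem_ofPred_eq, not_or, not_not, not_le] at hcon hn
    rw [← ht, Finset.sum_image hginj.injOn] at hcon
    rw [← hcon.2] at hn
    linarith [hcon.1]
  -- limits along ultrafilters on `D i`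
  have hne : ∀ i, NeBot (cofinite ⊓ 𝓟 (D i)) := fun i =>
    cofinite_inf_principal_neBot_iff.2 (hNinf (g i))
  let U : ℕ → Ultrafilter ℕ := fun i => Ultrafilter.of (cofinite ⊓ 𝓟 (D i))
  have hU : ∀ i, (U i : Filter ℕ) ≤ cofinite ⊓ 𝓟 (D i) := fun i => Ultrafilter.of_le _
  have hlim : ∀ i A, ∃ p : ℝ, Tendsto (x A) (U i) (𝓝 p) := by
    intro i A
    obtain ⟨p, -, hp⟩ := (isCompact_Icc (a := -‖ν A‖) (b := ‖ν A‖)).ultrafilter_le_nhds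
      ((U i).map (x A)) (le_principal_iff.2 (Ultrafilter.mem_map.2
        (Eventually.of_forall fun n => abs_le.1 (hxb A n))))
    exact ⟨p, hp⟩
  choose l hl using hlim
  have hladd : ∀ i, OneAdd F (l i) := by
    intro i A hA B hB hAB
    exact le_of_tendsto ((((hl i (A ∪ B)).sub (hl i A)).sub (hl i B)).norm)
      (Eventually.of_forall (hxadd A hA B hB hAB))
  have hla : ∀ A, ∀ ε : ℝ, ∀ a : ℕ → ℝ, {n : ℕ | ε ≤ |x A n - spread D a n|}.Finite →
      ∀ i, |l i A - a i| ≤ ε := by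
    intro A ε a hfin i
    refine le_of_tendsto (((hl i A).sub_const (a i)).abs) ?_
    filter_upwards [hU i (spread_eventually hD i a),
      hU i (mem_inf_of_left hfin.compl_mem_cofinite)] with n h1 h2
    simp only [Set.mem_compl_iff, Set.mem_ofPred_eq, not_le] at h1 h2
    rw [h1] at h2
    exact h2.le
  have hl0 : ∀ A ∈ F, Tendsto (fun i => l i A) atTop (𝓝 0) := by
    intro A hA
    rw [← Nat.cofinite_eq_atTop, Metric.tendsto_nhds]
    intro ε hε
    obtain ⟨t, a, hta, hfin⟩ := happ' A hA (ε / 2) (half_pos hε)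
    filter_upwards [t.finite_toSet.compl_mem_cofinite] with i hi
    have := hla A _ a hfin i
    rw [hta i hi, sub_zero] at this
    rw [Real.dist_eq, sub_zero]
    linarith
  -- the remainder, halved so as to be 1-additive
  let y : ℕ → Set Ω → ℝ := fun n A => (x A n - spread D (fun i => l i A) n) / 2
  have hyadd : ∀ n, OneAdd F (y n) := by
    intro n A hA B hB hAB
    have h1 := hxadd A hA B hB hAB n
    have h2 : |spread D (fun i => l i (A ∪ B)) n - spread D (fun i => l i A) n -
        spread D (fun i => l i B) n| ≤ 1 :=
      spread_rel (fun p q r => |p - q - r| ≤ 1) (by simp) (fun i => hladd i A hA B hB hAB) n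
    rw [abs_le] at h1 h2
    rw [Real.norm_eq_abs, abs_le]
    simp only [y]
    constructor <;> linarith [h1.1, h1.2, h2.1, h2.2]
  have hy0 : ∀ A ∈ F, Tendsto (fun n => y n A) atTop (𝓝 0) := by
    intro A hA
    rw [← Nat.cofinite_eq_atTop, Metric.tendsto_nhds]
    intro ε hε
    obtain ⟨t, a, hta, hfin⟩ := happ' A hA (ε / 2) (half_pos hε)
    filter_upwards [hfin.compl_mem_cofinite] with n hn
    have h2 : |spread D (fun i => l i A) n - spread D a n| ≤ ε / 2 :=
      spread_rel (c := a) (fun p q _ => |p - q| ≤ ε / 2) (by simpa using (half_pos hε).le)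
        (hla A _ a hfin) n
    simp only [Set.mem_compl_iff, Set.mem_ofPred_eq, not_le] at hn
    rw [abs_lt] at hn
    rw [abs_le] at h2
    rw [Real.dist_eq, sub_zero, abs_lt]
    simp only [y]
    constructor <;> linarith [hn.1, hn.2, h2.1, h2.2]
  obtain ⟨lam, hlamV, hlam0, hlamK⟩ := c0_approx hK hF hc l hladd hl0
  obtain ⟨rho, hrhoV, hrho0, hrhoK⟩ := c0_approx hK hF hc y hyadd hy0
  let M : Set Ω → ℕ → ℝ := fun A n => 2 * rho n A + spread D (fun i => lam i A) n
  have hMx : ∀ A ∈ F, ∀ n, |x A n - M A n| ≤ 6 * K := by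
    intro A hA n
    have h1 := abs_le.1 (hrhoK n A hA)
    have h2 : |spread D (fun i => l i A) n - spread D (fun i => lam i A) n| ≤ 2 * K :=
      spread_rel (c := 0) (fun p q _ => |p - q| ≤ 2 * K) (by simpa using hK0)
        (fun i => hlamK i A hA) n
    rw [abs_le] at h2
    rw [abs_le]
    simp only [M]
    simp only [y] at h1
    constructor <;> linarith [h1.1, h1.2, h2.1, h2.2]
  have hMex : ∀ A, ∃ z : ↥(JLinf Γ N), A ∈ F →
      ∀ n, (z : ↥(lp (fun _ : ℕ => ℝ) ⊤)) n = M A n := by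
    intro A
    by_cases hA : A ∈ F
    swap
    · exact ⟨0, fun h => absurd h hA⟩
    have hmem : Memℓp (M A) ⊤ := memℓp_infty ⟨‖ν A‖ + 6 * K, by
      rintro _ ⟨n, rfl⟩
      have h1 := abs_le.1 (hMx A hA n)
      have h2 := abs_le.1 (hxb A n)
      dsimp only
      rw [Real.norm_eq_abs, abs_le]
      constructor <;> linarith [h1.1, h1.2, h2.1, h2.2]⟩
    refine ⟨⟨⟨M A, hmem⟩, (mem_JLinf_iff _).2 fun ε hε => ?_⟩, fun _ n => rfl⟩
    have h1 : {i | ¬ |lam i A| < ε / 2}.Finite := by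
      have := hlam0 A hA
      rw [← Nat.cofinite_eq_atTop, Metric.tendsto_nhds] at this
      simpa [Real.dist_eq] using this (ε / 2) (half_pos hε)
    have h2 : {n | ¬ |rho n A| < ε / 4}.Finite := by
      have := hrho0 A hA
      rw [← Nat.cofinite_eq_atTop, Metric.tendsto_nhds] at this
      simpa [Real.dist_eq] using this (ε / 4) (by positivity)
    let t := h1.toFinset
    refine ⟨t.image g, fun γ => lam (Function.invFun g γ) A,
      (h2.union (spread_finite hD t fun i => lam i A)).subset fun n hn => ?_⟩
    by_contra hcon
    simp only [Set.mem_union, Set.mem_ofPred_eq, not_or, not_not] at hcon hn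
    rw [Finset.sum_image hginj.injOn] at hn
    simp only [Function.leftInverse_invFun hginj _] at hn
    rw [hcon.2] at hn
    have h3 : |spread D (fun i => lam i A) n -
        spread D (fun i => if i ∈ t then lam i A else 0) n| < ε / 2 := by
      refine spread_rel (c := 0) (fun p q _ => |p - q| < ε / 2) (by simpa using half_pos hε)
        (fun i => ?_) n
      split_ifs with hi
      · simpa using half_pos hε
      · simpa [t] using hi
    have h4 := abs_lt.1 hcon.1
    rw [abs_lt] at h3
    refine absurd hn (not_le.2 (abs_lt.2 ?_))
    simp only [M]
    constructor <;> linarith [h3.1, h3.2, h4.1, h4.2]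
  choose μ hμ using hMex
  refine ⟨μ, fun A hA B hB hAB => ?_, fun A hA => ?_⟩
  · refine Subtype.ext (lp.ext (funext fun n => ?_))
    have h2 : spread D (fun i => lam i (A ∪ B)) n = spread D (fun i => lam i A) n +
        spread D (fun i => lam i B) n :=
      spread_rel (fun p q r => p = q + r) (by simp) (fun i => hlamV i A hA B hB hAB) n
    rw [Submodule.coe_add, lp.coeFn_add, Pi.add_apply, hμ _ (hF.2.2 A hA B hB), hμ A hA, hμ B hB]
    simp only [M]
    rw [h2, hrhoV n A hA B hB hAB]
    ring
  · refine lp.norm_le_of_forall_le (by positivity) fun n => ?_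
    have := hMx A hA n
    rw [← hμ A hA] at this
    exact this

/-! ### Failure at cardinality `ℵ₁` -/

/-- Elements of `JL∞` are almost constant along each `N γ`, so the indicator of a subset splitting
`N γ` into two infinite pieces is not in `JL∞`. -/
lemma indicator_not_mem {Γ : Type} {N : Γ → Set ℕ}
    (hNad : ∀ γ δ : Γ, γ ≠ δ → (N γ ∩ N δ).Finite) (γ : Γ) {M : Set ℕ} (hM : M ⊆ N γ)
    (h1 : M.Infinite) (h2 : (N γ \ M).Infinite) (x : ↥(lp (fun _ : ℕ => ℝ) ⊤))
    (hx : ∀ n, x n = M.indicator (fun _ => (1 : ℝ)) n) : x ∉ JLinf Γ N := by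
  classical
  intro hmem
  obtain ⟨s, c, hs⟩ := (mem_JLinf_iff x).1 hmem (1 / 4) (by norm_num)
  have hfin : (⋃ δ ∈ s.erase γ, N γ ∩ N δ).Finite :=
    (s.erase γ).finite_toSet.biUnion fun δ hδ => hNad γ δ (Finset.ne_of_mem_erase hδ).symm
  have hsum : ∀ n ∈ N γ, n ∉ (⋃ δ ∈ s.erase γ, N γ ∩ N δ) →
      ∑ δ ∈ s, c δ * (N δ).indicator (fun _ => (1 : ℝ)) n = if γ ∈ s then c γ else 0 := by
    intro n hn hn'
    simp only [Set.mem_iUnion, not_exists, Set.mem_inter_iff, not_and, Finset.mem_erase] at hn'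
    rw [← Finset.sum_ite_eq s γ c]
    refine Finset.sum_congr rfl fun δ hδ => ?_
    by_cases h : γ = δ
    · subst h; simp [hn]
    · simp [hn' δ ⟨Ne.symm h, hδ⟩ hn, h]
  obtain ⟨n, hnM, hn⟩ := (h1.sdiff (hs.union hfin)).nonempty
  obtain ⟨k, hkM, hk⟩ := (h2.sdiff (hs.union hfin)).nonempty
  simp only [Set.mem_union, not_or] at hn hk
  have e1 := hn.1
  have e2 := hk.1
  rw [Set.mem_ofPred_eq, not_le, hsum n (hM hnM) hn.2, hx, Set.indicator_of_mem hnM,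
    abs_lt] at e1
  rw [Set.mem_ofPred_eq, not_le, hsum k hkM.1 hk.2, hx, Set.indicator_of_notMem hkM.2,
    abs_lt] at e2
  linarith [e1.1, e1.2, e2.1, e2.2]

lemma exists_split {S : Set ℕ} (hS : S.Infinite) :
    ∃ M ⊆ S, M.Infinite ∧ (S \ M).Infinite := by
  let f := hS.natEmbedding
  have hf : Function.Injective fun k => (f k : ℕ) := Subtype.val_injective.comp f.injective
  refine ⟨Set.range fun k => (f (2 * k) : ℕ), ?_, ?_, ?_⟩
  · rintro _ ⟨k, rfl⟩; exact (f _).2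
  · exact Set.infinite_range_of_injective fun a b h => by have := hf h; omega
  · refine (Set.infinite_range_of_injective (f := fun k => (f (2 * k + 1) : ℕ))
      fun a b h => by have := hf h; omega).mono ?_
    rintro _ ⟨k, rfl⟩
    refine ⟨(f _).2, ?_⟩
    rintro ⟨j, hj⟩
    have := hf hj
    omega

lemma mk_finite_cofinite_lt {Ω : Type} (hΩ : #Ω = ℵ₁) :
    #(↥{A : Set Ω | A.Finite ∨ Aᶜ.Finite}) < Cardinal.aleph 2 := by
  have hinf : Infinite Ω := by
    rw [Cardinal.infinite_iff, hΩ]; exact Cardinal.aleph0_le_aleph 1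
  have h1 : #(↥{A : Set Ω | A.Finite}) ≤ ℵ₁ := by
    rw [← hΩ, ← Cardinal.mk_finset_of_infinite Ω]
    exact Cardinal.mk_le_of_surjective (f := fun s : Finset Ω => ⟨(s : Set Ω), s.finite_toSet⟩)
      fun A => ⟨A.2.toFinset, Subtype.ext (by simp)⟩
  have h2 : #(↥{A : Set Ω | Aᶜ.Finite}) ≤ ℵ₁ := by
    refine le_trans (Cardinal.mk_le_of_injective
      (f := fun A : ↥{A : Set Ω | Aᶜ.Finite} => (⟨(A : Set Ω)ᶜ, A.2⟩ : ↥{A : Set Ω | A.Finite}))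
      fun A B h => Subtype.ext ?_) h1
    exact compl_injective (Subtype.ext_iff.1 h)
  have h3 : #(↥{A : Set Ω | A.Finite ∨ Aᶜ.Finite}) ≤ ℵ₁ := by
    have h4 := Cardinal.mk_union_le {A : Set Ω | A.Finite} {A : Set Ω | Aᶜ.Finite}
    refine h4.trans ((add_le_add h1 h2).trans ?_)
    rw [Cardinal.add_eq_self (Cardinal.aleph0_le_aleph 1)]
  exact h3.trans_lt (Cardinal.aleph_lt_aleph.2 (by norm_num))

/-- Part (b). For subsets `M α` splitting `ℵ₁` many of the `N α`, put
`ν A n = #{α ∈ A | n ∈ M α} - 1` (truncated at `0`) on finite `A`, and `ν A = -ν Aᶜ` on cofinite `A`.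
For an approximating measure `μ`, the measure `A ↦ ∑ α ∈ A, 1_{M α} - μ A` on finite sets is
bounded, so in each coordinate it charges only countably many points; hence `μ {α} = 1_{M α}` for
some `α`, although `1_{M α} ∉ JL∞`. -/
lemma JLinf_not_aleph_two {Γ : Type} (hΓ : #Γ = Cardinal.continuum)
    {N : Γ → Set ℕ} (hNinf : ∀ γ : Γ, (N γ).Infinite)
    (hNad : ∀ γ δ : Γ, γ ≠ δ → (N γ ∩ N δ).Finite) (v : ℝ) :
    ¬ HasKappaSVMBound (↥(JLinf Γ N)) (Cardinal.aleph 2) v := by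
  classical
  intro hv
  obtain ⟨Γ₀, hΓ₀⟩ : ∃ p : Set Γ, #p = ℵ₁ := by
    rw [← Cardinal.le_mk_iff_exists_set, hΓ]
    exact Cardinal.aleph_one_le_continuum
  have hinf : Infinite Γ₀ := by
    rw [Cardinal.infinite_iff, hΓ₀]; exact Cardinal.aleph0_le_aleph 1
  choose M hMN hM1 hM2 using fun α : Γ₀ => exists_split (hNinf α)
  let cnt : Finset Γ₀ → ℕ → ℕ := fun s n => (s.filter fun α => n ∈ M α).card
  have hcnt : ∀ s t : Finset Γ₀, Disjoint s t → ∀ n, cnt (s ∪ t) n = cnt s n + cnt t n := by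
    intro s t hst n
    simp only [cnt]
    rw [Finset.filter_union, Finset.card_union_of_disjoint]
    exact Finset.disjoint_filter_filter hst
  have hcntsum : ∀ s n, (cnt s n : ℝ) =
      ∑ α ∈ s, (M α).indicator (fun _ => (1 : ℝ)) n := by
    intro s n
    simp [cnt, Set.indicator_apply]
  have hG : ∀ s : Finset Γ₀, ∃ z : ↥(JLinf Γ N),
      ∀ n, (z : ↥(lp (fun _ : ℕ => ℝ) ⊤)) n = ((cnt s n - 1 : ℕ) : ℝ) := by
    intro s
    have hmem : Memℓp (fun n => ((cnt s n - 1 : ℕ) : ℝ)) ⊤ := memℓp_infty ⟨s.card, by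
      rintro _ ⟨n, rfl⟩
      have : cnt s n ≤ s.card := Finset.card_filter_le _ _
      simp only [Real.norm_natCast]
      exact_mod_cast (by omega : cnt s n - 1 ≤ s.card)⟩
    refine ⟨⟨⟨_, hmem⟩, (mem_JLinf_iff _).2 fun ε hε => ⟨∅, 0, ?_⟩⟩, fun n => rfl⟩
    have hfin : (⋃ p ∈ s.offDiag, N (p.1 : Γ) ∩ N (p.2 : Γ)).Finite :=
      s.offDiag.finite_toSet.biUnion fun p hp =>
        hNad _ _ (Subtype.val_injective.ne (Finset.mem_offDiag.1 hp).2.2)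
    refine hfin.subset fun n hn => ?_
    have h2 : 1 < cnt s n := by
      by_contra hcon
      have : cnt s n - 1 = 0 := by omega
      simp [this] at hn
      linarith
    obtain ⟨a, ha, b, hb, hab⟩ := Finset.one_lt_card.1 h2
    simp only [Finset.mem_filter] at ha hb
    simp only [Set.mem_iUnion]
    exact ⟨(a, b), Finset.mem_offDiag.2 ⟨ha.1, hb.1, hab⟩, hMN a ha.2, hMN b hb.2⟩
  choose G hG using hG
  have hGadd : ∀ s t : Finset Γ₀, Disjoint s t → ‖G (s ∪ t) - G s - G t‖ ≤ 1 := by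
    intro s t hst
    refine lp.norm_le_of_forall_le zero_le_one fun n => ?_
    have h : |((cnt s n + cnt t n - 1 : ℕ) : ℝ) - ((cnt s n - 1 : ℕ) : ℝ)
        - ((cnt t n - 1 : ℕ) : ℝ)| ≤ 1 := by
      have h' : |((cnt s n + cnt t n - 1 : ℕ) : ℤ) - ((cnt s n - 1 : ℕ) : ℤ)
        - ((cnt t n - 1 : ℕ) : ℤ)| ≤ 1 := by
        rw [abs_le]; omega
      exact_mod_cast h'
    rw [← hcnt s t hst, ← hG, ← hG, ← hG] at h
    exact h
  let ν : Set Γ₀ → ↥(JLinf Γ N) := fun A =>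
    if h : A.Finite then G h.toFinset else if h : Aᶜ.Finite then - G h.toFinset else 0
  have hνfin : ∀ s : Finset Γ₀, ν s = G s := fun s => by simp [ν]
  have hνcof : ∀ s : Finset Γ₀, ν (s : Set Γ₀)ᶜ = - G s := fun s => by
    have h1 : ¬ (s : Set Γ₀)ᶜ.Finite := s.finite_toSet.infinite_compl
    have h2 : (s : Set Γ₀)ᶜᶜ.Finite := by simp
    simp [ν, h1]
  let F : Set (Set Γ₀) := {A | A.Finite ∨ Aᶜ.Finite}
  have hF : IsSetAlg F := by
    refine ⟨Or.inl Set.finite_empty, fun A hA => ?_, fun A hA B hB => ?_⟩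
    · rcases hA with h | h
      · exact Or.inr (by simpa using h)
      · exact Or.inl h
    · rcases hA with h | h
      · rcases hB with h' | h'
        · exact Or.inl (h.union h')
        · exact Or.inr (h'.subset (by simp))
      · exact Or.inr (h.subset (by simp))
  -- the defect for a finite and a cofinite set
  have hmix : ∀ A B : Set Γ₀, A.Finite → Bᶜ.Finite → Disjoint A B →
      ‖ν (A ∪ B) - ν A - ν B‖ ≤ 1 := by
    intro A B hA hB hAB
    obtain ⟨s, rfl⟩ := hA.exists_finset_coe
    obtain ⟨t, ht⟩ := hB.exists_finset_coe
    obtain rfl : B = (t : Set Γ₀)ᶜ := by rw [ht, compl_compl]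
    have hst : s ⊆ t := by
      rw [← Finset.coe_subset, ← Set.disjoint_compl_right_iff_subset]; exact hAB
    have hu : (s : Set Γ₀) ∪ (t : Set Γ₀)ᶜ = ((t \ s : Finset Γ₀) : Set Γ₀)ᶜ := by
      ext a; simp; tauto
    have h := hGadd (t \ s) s Finset.sdiff_disjoint
    rw [Finset.sdiff_union_of_subset hst] at h
    rw [hu, hνfin, hνcof, hνcof]
    convert h using 2
    abel
  have hνadd : OneAdd F ν := by
    intro A hA B hB hAB
    rcases hA with hA | hA
    · rcases hB with hB | hB
      · obtain ⟨s, rfl⟩ := hA.exists_finset_coe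
        obtain ⟨t, rfl⟩ := hB.exists_finset_coe
        rw [← Finset.coe_union, hνfin, hνfin, hνfin]
        exact hGadd s t (Finset.disjoint_coe.1 hAB)
      · exact hmix A B hA hB hAB
    · have hB' : B.Finite := hA.subset (Set.subset_compl_iff_disjoint_left.2 hAB)
      have := hmix B A hB' hA hAB.symm
      rw [Set.union_comm, sub_right_comm]
      exact this
  obtain ⟨μ, hμV, hμ⟩ := hv Γ₀ F hF (mk_finite_cofinite_lt hΓ₀) ν hνadd
  have hμsum : ∀ s : Finset Γ₀, μ s = ∑ α ∈ s, μ {α} := by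
    intro s
    induction s using Finset.induction_on with
    | empty =>
      have := hμV ∅ hF.1 ∅ hF.1 (by simp)
      simpa using this
    | insert a s ha ih =>
      rw [Finset.sum_insert ha, ← ih, Finset.coe_insert, Set.insert_eq]
      exact hμV {a} (Or.inl (Set.finite_singleton a)) s (Or.inl s.finite_toSet) (by simpa using ha)
  -- the difference measure at the point `α`, in coordinate `n`
  let f : ℕ → Γ₀ → ℝ := fun n α => (M α).indicator (fun _ => (1 : ℝ)) n -
    (μ {α} : ↥(lp (fun _ : ℕ => ℝ) ⊤)) n
  have hfb : ∀ n s, |∑ α ∈ s, f n α| ≤ v + 1 := by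
    intro n s
    have h1 : |((cnt s n - 1 : ℕ) : ℝ) - (μ s : ↥(lp (fun _ : ℕ => ℝ) ⊤)) n| ≤ v := by
      have h := (lp.norm_apply_le_norm ENNReal.top_ne_zero
        ((ν s - μ s : ↥(JLinf Γ N)) : ↥(lp (fun _ : ℕ => ℝ) ⊤)) n).trans
        (hμ s (Or.inl s.finite_toSet))
      rw [hνfin] at h
      rw [← hG]
      exact h
    have h2 : ∑ α ∈ s, f n α = cnt s n - (μ s : ↥(lp (fun _ : ℕ => ℝ) ⊤)) n := by
      simp only [f]
      rw [Finset.sum_sub_distrib, ← hcntsum, hμsum, Submodule.coe_sum, lp_sum_apply]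
    have h3 : ((cnt s n - 1 : ℕ) : ℝ) ≤ cnt s n := by exact_mod_cast Nat.sub_le _ _
    have h4 : (cnt s n : ℝ) ≤ ((cnt s n - 1 : ℕ) : ℝ) + 1 := by
      exact_mod_cast (by omega : cnt s n ≤ cnt s n - 1 + 1)
    rw [abs_le] at h1
    rw [h2, abs_le]
    constructor <;> linarith [h1.1, h1.2]
  have hfs : ∀ n, (Function.support (f n)).Countable := by
    intro n
    have hs : Summable fun α => |f n α| := by
      refine summable_of_sum_le (c := 2 * (v + 1)) (fun α => abs_nonneg _) fun s => ?_
      rw [← Finset.sum_filter_add_sum_filter_not s (fun α => 0 ≤ f n α)]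
      have e1 : ∑ α ∈ s.filter (fun α => 0 ≤ f n α), |f n α| =
          ∑ α ∈ s.filter (fun α => 0 ≤ f n α), f n α :=
        Finset.sum_congr rfl fun α hα => abs_of_nonneg (Finset.mem_filter.1 hα).2
      have e2 : ∑ α ∈ s.filter (fun α => ¬ 0 ≤ f n α), |f n α| =
          - ∑ α ∈ s.filter (fun α => ¬ 0 ≤ f n α), f n α := by
        rw [← Finset.sum_neg_distrib]
        exact Finset.sum_congr rfl fun α hα =>
          abs_of_neg (not_le.1 (Finset.mem_filter.1 hα).2)
      have b1 := abs_le.1 (hfb n (s.filter fun α => 0 ≤ f n α))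
      have b2 := abs_le.1 (hfb n (s.filter fun α => ¬ 0 ≤ f n α))
      rw [e1, e2]
      linarith [b1.2, b2.1]
    exact (summable_abs_iff.1 hs).countable_support
  have huncount : ¬ (Set.univ : Set Γ₀).Countable := by
    rw [Set.countable_univ_iff, ← Cardinal.mk_le_aleph0_iff, hΓ₀, not_le]
    exact Cardinal.aleph0_lt_aleph_one
  obtain ⟨α, hα⟩ : ∃ α, α ∉ ⋃ n, Function.support (f n) := by
    by_contra! hcon
    exact huncount ((Set.countable_iUnion hfs).mono fun α _ => hcon α)
  refine indicator_not_mem hNad α (hMN α) (hM1 α) (hM2 α) (μ {α}) (fun n => ?_) (μ {α}).2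
  have : f n α = 0 := by
    by_contra h
    exact hα (Set.mem_iUnion.2 ⟨n, h⟩)
  linarith [sub_eq_zero.1 this]

/-- for an almost disjoint family of size continuum, the
Johnson–Lindenstrauss space JL∞ has the ω₁-SVM property with any constant
v > 120K, fails the ω₂-SVM property, and its SVM character equals ω₂. -/
theorem stmt_16 (K : ℝ) (hK : IsKRConst K)
    (Γ : Type) (hΓ : #Γ = Cardinal.continuum)
    (N : Γ → Set ℕ) (hNinf : ∀ γ : Γ, (N γ).Infinite)
    (hNad : ∀ γ δ : Γ, γ ≠ δ → (N γ ∩ N δ).Finite) :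
    (∀ v : ℝ, 120 * K < v →
      ∀ (Ω : Type) (F : Set (Set Ω)), IsSetAlg F → F.Countable →
        ∀ ν : Set Ω → ↥(JLinf Γ N), OneAdd F ν →
          ∃ μ : Set Ω → ↥(JLinf Γ N), VectMeas F μ ∧ ∀ A ∈ F, ‖ν A - μ A‖ ≤ v) ∧
    (¬ ∃ v : ℝ, HasKappaSVMBound (↥(JLinf Γ N)) (Cardinal.aleph 2) v) ∧
    (∀ κ : Cardinal, κ < Cardinal.aleph 2 →
      ∃ v : ℝ, HasKappaSVMBound (↥(JLinf Γ N)) κ v) := by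
  have hinf : Infinite Γ := by
    rw [Cardinal.infinite_iff, hΓ]; exact Cardinal.aleph0_le_continuum
  refine ⟨fun v hv Ω F hF hc ν hν => ?_, ?_, fun κ hκ => ⟨6 * K, fun Ω F hF hcard ν hν => ?_⟩⟩
  · obtain ⟨μ, hμ, h⟩ := JLinf_countable hK hNinf hNad hF hc ν hν
    -- `6 * K ≤ 120 * K`, as the bound at `∅` makes `K` nonnegative
    have h0 := (norm_nonneg _).trans (h ∅ hF.1)
    exact ⟨μ, hμ, fun A hA => (h A hA).trans (by linarith)⟩
  · rintro ⟨v, hv⟩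
    exact JLinf_not_aleph_two hΓ hNinf hNad v hv
  · refine JLinf_countable hK hNinf hNad hF ?_ ν hν
    rw [← Cardinal.le_aleph0_iff_set_countable, ← Cardinal.lt_aleph_one_iff]
    refine hcard.trans_le ?_
    have h2 : Cardinal.aleph 2 = Order.succ ℵ₁ := by
      rw [Cardinal.succ_aleph, one_add_one_eq_two]
    rwa [h2, Order.lt_succ_iff] at hκ
end
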